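/- arXiv:1506.02533 — 2 statements merged into one kernel-verified Lean document; each statement's English description precedes it below -/
import Mathlib

section
/- Let n ≥ 2, k ≥ 0, and suppose (n-1)/(2(n+1)) ≥ 1/p ≥ (n-1)/(2(n+1)) - k/n with p < ∞. If ‖F_t u‖_{L²_τ L_x^{2(n+1)/(n-1)}} ≲ ‖u₀‖_{Ḣ^{(n-1)/(2(n+1))}} holds for u = e^{it|∇|}u₀, then ‖u‖_{L^p_x L²_t} ≲ ‖u₀‖_{H^{k + (n-1)/(2(n+1))}}, by Plancherel, Minkowski's inequality, and Sobolev embedding. -/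
open FourierTransform MeasureTheory Real

variable {n : ℕ}

/-- The half-wave propagator `e^{it|∇|}u₀`, defined via the Fourier multiplier
`e^{it|ξ|}`. -/
noncomputable def halfWave (u₀ : SchwartzMap (EuclideanSpace ℝ (Fin n)) ℂ)
    (t : ℝ) : EuclideanSpace ℝ (Fin n) → ℂ :=
  𝓕⁻ (fun ξ => Complex.exp (Complex.I * t * ‖ξ‖) * 𝓕 (⇑u₀) ξ)

/-- Mixed norm `L²_τ L^r_x` of `F : ℝ × ℝⁿ → ℂ`. -/
noncomputable def L2LrNorm (r : ℝ)
    (F : ℝ → EuclideanSpace ℝ (Fin n) → ℂ) : ℝ :=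
  (∫ τ : ℝ, ((∫ x : EuclideanSpace ℝ (Fin n), ‖F τ x‖ ^ r) ^ (2 / r))) ^ (1 / 2 : ℝ)

/-- Mixed norm `L^p_x L²_t` of `u : ℝ × ℝⁿ → ℂ`. -/
noncomputable def LpL2Norm (p : ℝ)
    (u : ℝ → EuclideanSpace ℝ (Fin n) → ℂ) : ℝ :=
  (∫ x : EuclideanSpace ℝ (Fin n), ((∫ t : ℝ, ‖u t x‖ ^ 2) ^ (p / 2))) ^ (1 / p)

/-- Inhomogeneous Sobolev norm `H^s`. -/
noncomputable def HsNorm (s : ℝ) (f : EuclideanSpace ℝ (Fin n) → ℂ) : ℝ :=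
  (∫ ξ : EuclideanSpace ℝ (Fin n), (1 + ‖ξ‖ ^ 2) ^ s * ‖𝓕 f ξ‖ ^ 2) ^ (1 / 2 : ℝ)

/-- Homogeneous Sobolev norm `Ḣ^s`. -/
noncomputable def HdotNorm (s : ℝ) (f : EuclideanSpace ℝ (Fin n) → ℂ) : ℝ :=
  (∫ ξ : EuclideanSpace ℝ (Fin n), ‖ξ‖ ^ (2 * s) * ‖𝓕 f ξ‖ ^ 2) ^ (1 / 2 : ℝ)

/-!
Writing `ξ` in polar coordinates, `t ↦ u(t, x)` is an inverse Fourier transform in `t`, whose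
density `W(τ, x)` is the inverse Fourier transform of `𝓕 u₀` restricted to the sphere `|ξ| = 2πτ`
(and vanishes for `τ ≤ 0`). By Plancherel `‖u(·, x)‖_{L²_t} = ‖W(·, x)‖_{L²_τ}`, and since `p ≥ 2`
Minkowski's inequality gives `‖u‖_{L^p_x L²_t} ≤ ‖W‖_{L²_τ L^p_x}`. Each slice `W(τ, ·)` oscillates
at a single frequency, so Bernstein's inequality plays the part of Sobolev embedding: passing from
`L^p_x` to `L^r_x` costs `(2πτ)^{n(1/r - 1/p)} ≤ (1 + (2πτ)²)^{k/2}`, which is exactly the effect on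
`W(τ, ·)` of a Bessel potential of order `k` applied to `u₀`. The square function bound for that
Bessel potential then concludes.

A finite `L²_τ L^r_x` norm of `W` is needed for the integrals in the hypothesis not to be junk
zeros. It follows from the decay `|z|^{-(n-1)/2}` of the Fourier transform of surface measure on the
sphere, itself a consequence of an energy estimate for the Bessel equation satisfied along rays.
-/

open Set Filter Topology Module Metric
open scoped Laplacian ENNReal NNReal Pointwise InnerProductSpace SchwartzMap

noncomputable section

section Sphere

variable (E : Type*) [NormedAddCommGroup E] [InnerProductSpace ℝ E] [FiniteDimensional ℝ E]
  [MeasurableSpace E] [BorelSpace E]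

/-- Surface measure on the unit sphere of `E`, pushed forward to a measure on `E`. -/
def unitSphereMeasure : Measure E :=
  (volume : Measure E).toSphere.map Subtype.val

/-- The measure `r ^ d dr` on `(0, ∞)`, as a measure on `ℝ`: the radial part of Lebesgue measure
in dimension `d + 1`. -/
def radialMeasure (d : ℕ) : Measure ℝ :=
  (volume.restrict (Ioi 0)).withDensity fun r => ENNReal.ofReal (r ^ d)

instance : IsFiniteMeasure (unitSphereMeasure E) := by
  unfold unitSphereMeasure; infer_instance

instance (d : ℕ) : SFinite (radialMeasure d) := by
  unfold radialMeasure; infer_instance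

variable {E}

lemma ae_norm_eq_one_unitSphereMeasure : ∀ᵐ ω ∂unitSphereMeasure E, ‖ω‖ = 1 := by
  rw [unitSphereMeasure, ae_map_iff measurable_subtype_coe.aemeasurable
    (measurableSet_eq_fun measurable_norm measurable_const)]
  exact ae_of_all _ fun ω => norm_eq_of_mem_sphere ω

lemma measurePreserving_linearIsometryEquiv_unitSphereMeasure (R : E ≃ₗᵢ[ℝ] E) :
    MeasurePreserving R (unitSphereMeasure E) (unitSphereMeasure E) := by
  refine ⟨R.continuous.measurable, Measure.ext fun s hs => ?_⟩
  have hval : Measurable (Subtype.val : sphere (0 : E) 1 → E) := measurable_subtype_coe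
  have hR : MeasurableSet (R ⁻¹' s) := R.continuous.measurable hs
  have cone : Ioo (0 : ℝ) 1 • (Subtype.val '' (Subtype.val ⁻¹' (R ⁻¹' s) : Set (sphere (0 : E) 1)))
      = R ⁻¹' (Ioo (0 : ℝ) 1 • (Subtype.val '' (Subtype.val ⁻¹' s : Set (sphere (0 : E) 1)))) := by
    ext x
    simp only [Subtype.image_preimage_coe, Set.mem_smul, mem_inter_iff, mem_preimage,
      mem_sphere_zero_iff_norm]
    constructor
    · rintro ⟨c, hc, y, ⟨hy, hys⟩, rfl⟩
      exact ⟨c, hc, R y, ⟨by rwa [R.norm_map], hys⟩, (R.map_smul c y).symm⟩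
    · rintro ⟨c, hc, y, ⟨hy, hys⟩, hxy⟩
      refine ⟨c, hc, R.symm y, ⟨by rwa [R.symm.norm_map], by simpa using hys⟩, ?_⟩
      rw [← R.symm.map_smul, hxy, R.symm_apply_apply]
  rw [Measure.map_apply R.continuous.measurable hs, unitSphereMeasure,
    Measure.map_apply hval hR, Measure.map_apply hval hs, Measure.toSphere_apply' _ (hval hR),
    Measure.toSphere_apply' _ (hval hs), cone,
    R.measurePreserving.measure_preimage_emb R.toHomeomorph.measurableEmbedding]

lemma radialMeasure_eq_map_volumeIoiPow (d : ℕ) :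
    radialMeasure d = (Measure.volumeIoiPow d).map Subtype.val := by
  ext s hs
  rw [radialMeasure, Measure.volumeIoiPow, Measure.map_apply measurable_subtype_coe hs,
    withDensity_apply _ hs, withDensity_apply _ (measurable_subtype_coe hs),
    ← map_comap_subtype_coe measurableSet_Ioi volume,
    setLIntegral_map hs (by fun_prop) measurable_subtype_coe]

lemma measurePreserving_smul_radialMeasure_unitSphereMeasure [Nontrivial E] :
    MeasurePreserving (fun q : E × ℝ => q.2 • q.1)
      ((unitSphereMeasure E).prod (radialMeasure (finrank ℝ E - 1))) volume := by
  refine ⟨by fun_prop, ?_⟩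
  have hpolar := (volume : Measure E).measurePreserving_homeomorphUnitSphereProd.symm
    (homeomorphUnitSphereProd E).toMeasurableEquiv
  rw [unitSphereMeasure, radialMeasure_eq_map_volumeIoiPow, Measure.map_prod_map _ _
    measurable_subtype_coe measurable_subtype_coe, Measure.map_map (by fun_prop) (by fun_prop)]
  calc _ = Measure.map Subtype.val (Measure.map (homeomorphUnitSphereProd E).symm
        ((volume : Measure E).toSphere.prod (.volumeIoiPow (finrank ℝ E - 1)))) := by
        rw [Measure.map_map (by fun_prop) (homeomorphUnitSphereProd E).symm.measurable]
        rfl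
    _ = volume := by
        rw [show Measure.map (homeomorphUnitSphereProd E).symm _ = _ from hpolar.map_eq,
          map_comap_subtype_coe (measurableSet_singleton _).compl, restrict_compl_singleton]

lemma integrable_comp_smul_unitSphereMeasure_prod [Nontrivial E]
    {V : Type*} [NormedAddCommGroup V] {f : E → V} (hf : Integrable f) :
    Integrable (fun q : E × ℝ => f (q.2 • q.1))
      ((unitSphereMeasure E).prod (radialMeasure (finrank ℝ E - 1))) :=
  measurePreserving_smul_radialMeasure_unitSphereMeasure.integrable_comp_of_integrable hf

variable {V : Type*} [NormedAddCommGroup V] [NormedSpace ℝ V]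

lemma integral_radialMeasure (d : ℕ) (g : ℝ → V) :
    ∫ r, g r ∂radialMeasure d = ∫ r in Ioi 0, r ^ d • g r := by
  rw [radialMeasure, integral_withDensity_eq_integral_toReal_smul (by fun_prop) (by simp)]
  exact setIntegral_congr_fun measurableSet_Ioi fun r hr => by
    rw [ENNReal.toReal_ofReal (pow_nonneg (mem_Ioi.1 hr).le d)]

section Polar

variable [Nontrivial E] {f : E → V}

lemma integral_eq_integral_unitSphereMeasure_integral_Ioi (hf : Integrable f) :
    ∫ x, f x =
      ∫ ω, (∫ r in Ioi (0 : ℝ), r ^ (finrank ℝ E - 1) • f (r • ω)) ∂unitSphereMeasure E := by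
  have hpolar := measurePreserving_smul_radialMeasure_unitSphereMeasure (E := E)
  rw [← hpolar.map_eq, integral_map hpolar.aemeasurable
    (hpolar.map_eq ▸ hf.aestronglyMeasurable),
    integral_prod _ (integrable_comp_smul_unitSphereMeasure_prod hf)]
  simp only [integral_radialMeasure]

lemma integral_eq_integral_Ioi_integral_unitSphereMeasure (hf : Integrable f) :
    ∫ x, f x = ∫ r in Ioi (0 : ℝ), r ^ (finrank ℝ E - 1) • ∫ ω, f (r • ω) ∂unitSphereMeasure E := by
  have hpolar := measurePreserving_smul_radialMeasure_unitSphereMeasure (E := E)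
  rw [← hpolar.map_eq, integral_map hpolar.aemeasurable
    (hpolar.map_eq ▸ hf.aestronglyMeasurable),
    integral_prod_symm _ (integrable_comp_smul_unitSphereMeasure_prod hf), integral_radialMeasure]

end Polar

end Sphere

section Radial

variable {E V : Type*} [NormedAddCommGroup E] [InnerProductSpace ℝ E]
  [NormedAddCommGroup V] [NormedSpace ℝ V] {F : E → V}

lemma fderiv_apply_eq_zero_of_radial (hF : Differentiable ℝ F)
    (hrad : ∀ x y, ‖x‖ = ‖y‖ → F x = F y) {z w : E} (hzw : ⟪z, w⟫_ℝ = 0) :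
    fderiv ℝ F z w = 0 := by
  have hline : HasDerivAt (fun s : ℝ => F (z + s • w)) (fderiv ℝ F z w) 0 := by
    have := (hF (z + (0 : ℝ) • w)).hasFDerivAt.comp_hasDerivAt (0 : ℝ)
      (((hasDerivAt_id (0 : ℝ)).smul_const w).const_add z)
    simpa [Function.comp_def] using this
  have heven : (fun s : ℝ => F (z + (-s) • w)) = fun s => F (z + s • w) := by
    ext s
    refine hrad _ _ ?_
    rw [← sq_eq_sq₀ (norm_nonneg _) (norm_nonneg _), norm_add_sq_real, norm_add_sq_real]
    simp [inner_smul_right, hzw, norm_smul]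
  have hneg := deriv_comp_neg (fun s : ℝ => F (z + s • w)) 0
  rw [heven, neg_zero, hline.deriv] at hneg
  simpa using (two_smul ℝ (fderiv ℝ F z w)).trans (add_eq_zero_iff_eq_neg.2 hneg)

lemma smul_fderiv_fderiv_eq_fderiv_of_radial (hF : ContDiff ℝ 2 F)
    (hrad : ∀ x y, ‖x‖ = ‖y‖ → F x = F y) {e w : E} (he : ‖e‖ = 1) (hw : ‖w‖ = 1)
    (hew : ⟪e, w⟫_ℝ = 0) (r : ℝ) :
    r • fderiv ℝ (fderiv ℝ F) (r • e) w w = fderiv ℝ F (r • e) e := by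
  have htangent : ∀ s : ℝ, fderiv ℝ F (r • e + s • w) (r • w - s • e) = 0 := fun s => by
    refine fderiv_apply_eq_zero_of_radial (hF.differentiable (by norm_num)) hrad ?_
    simp only [inner_add_left, inner_sub_right, real_inner_smul_left, real_inner_smul_right, hew,
      real_inner_comm e w, real_inner_self_eq_norm_sq, he, hw]
    ring
  have hcurve : HasDerivAt (fun s : ℝ => r • e + s • w) w 0 := by
    simpa using ((hasDerivAt_id (0 : ℝ)).smul_const w).const_add (r • e)
  have hvec : HasDerivAt (fun s : ℝ => r • w - s • e) (-e) 0 := by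
    simpa using ((hasDerivAt_id (0 : ℝ)).smul_const e).const_sub (r • w)
  have hD : HasDerivAt (fun s : ℝ => fderiv ℝ F (r • e + s • w))
      (fderiv ℝ (fderiv ℝ F) (r • e) w) 0 := by
    have hdiff : Differentiable ℝ (fderiv ℝ F) :=
      (hF.fderiv_right (m := 1) (by norm_num)).differentiable (by norm_num)
    have := (hdiff (r • e + (0 : ℝ) • w)).hasFDerivAt.comp_hasDerivAt (0 : ℝ) hcurve
    simpa [Function.comp_def] using this
  have hzero := (hD.clm_apply hvec).unique (by simpa only [htangent] using hasDerivAt_const 0 0)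
  simpa [sub_eq_zero, ← sub_eq_add_neg] using hzero

lemma smul_laplacian_of_radial [FiniteDimensional ℝ E] (hF : ContDiff ℝ 2 F)
    (hrad : ∀ x y, ‖x‖ = ‖y‖ → F x = F y) {e : E} (he : ‖e‖ = 1) (r : ℝ) :
    r • Δ F (r • e) = r • fderiv ℝ (fderiv ℝ F) (r • e) e e
      + ((finrank ℝ E : ℝ) - 1) • fderiv ℝ F (r • e) e := by
  classical
  obtain ⟨u, b, heu, hb⟩ := Orthonormal.exists_orthonormalBasis_extension
    (𝕜 := ℝ) (v := {e})
    (orthonormal_subsingleton_iff.2 fun i => by rw [mem_singleton_iff.1 i.2, he])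
  have heu : e ∈ u := heu rfl
  have hcard : ((u.erase e).card : ℝ) = finrank ℝ E - 1 := by
    rw [Finset.card_erase_of_mem heu, finrank_eq_card_basis b.toBasis, Fintype.card_coe,
      Nat.cast_sub (Finset.card_pos.2 ⟨e, heu⟩), Nat.cast_one]
  have hperp : ∀ w ∈ u.erase e,
      r • fderiv ℝ (fderiv ℝ F) (r • e) w w = fderiv ℝ F (r • e) e := fun w hw => by
    obtain ⟨hwe, hwu⟩ := Finset.mem_erase.1 hw
    have hinner := b.orthonormal.2 (i := ⟨e, heu⟩) (j := ⟨w, hwu⟩) (by simpa using hwe.symm)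
    have hnorm := b.orthonormal.1 ⟨w, hwu⟩
    rw [hb] at hinner hnorm
    exact smul_fderiv_fderiv_eq_fderiv_of_radial hF hrad he hnorm hinner r
  simp only [InnerProductSpace.laplacian_eq_iteratedFDeriv_orthonormalBasis F b,
    iteratedFDeriv_two_apply, hb, Matrix.cons_val_zero, Matrix.cons_val_one]
  rw [Finset.sum_coe_sort u fun w => fderiv ℝ (fderiv ℝ F) (r • e) w w,
    ← Finset.add_sum_erase u _ heu, smul_add, Finset.smul_sum, Finset.sum_congr rfl hperp,
    Finset.sum_const, ← Nat.cast_smul_eq_nsmul ℝ, hcard]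

end Radial

section SphereFourierTransform

variable {E : Type*} [NormedAddCommGroup E] [InnerProductSpace ℝ E] [FiniteDimensional ℝ E]
  [MeasurableSpace E] [BorelSpace E]

lemma charFun_unitSphereMeasure_eq_of_norm_eq {x y : E} (hxy : ‖x‖ = ‖y‖) :
    charFun (unitSphereMeasure E) x = charFun (unitSphereMeasure E) y := by
  set R := (Submodule.span ℝ {x - y})ᗮ.reflection
  have hRx : R x = y := Submodule.reflection_sub hxy
  have hR := measurePreserving_linearIsometryEquiv_unitSphereMeasure R
  rw [charFun_apply, charFun_apply y,
    ← hR.integral_comp R.toHomeomorph.measurableEmbedding fun ω => Complex.exp (⟪ω, y⟫_ℝ * _)]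
  simp only [← hRx, LinearIsometryEquiv.inner_map_map]

lemma memLp_id_unitSphereMeasure (p : ℝ≥0∞) : MemLp id p (unitSphereMeasure E) :=
  MemLp.of_bound (by fun_prop) 1 (ae_norm_eq_one_unitSphereMeasure.mono fun _ hω => hω.le)

lemma contDiff_charFun_unitSphereMeasure (k : ℕ) :
    ContDiff ℝ k (charFun (unitSphereMeasure E)) :=
  contDiff_charFun (memLp_id_unitSphereMeasure k)

lemma laplacian_charFun_unitSphereMeasure (z : E) :
    Δ (charFun (unitSphereMeasure E)) z = -charFun (unitSphereMeasure E) z := by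
  set b := stdOrthonormalBasis ℝ E
  have hint : ∀ i, Integrable (fun ω : E => ((⟪ω, b i⟫_ℝ * ⟪ω, b i⟫_ℝ : ℝ) : ℂ)
      * Complex.exp (⟪ω, z⟫_ℝ * Complex.I)) (unitSphereMeasure E) := fun i => by
    refine .of_bound (by fun_prop) 1 (ae_norm_eq_one_unitSphereMeasure.mono fun ω hω => ?_)
    have hcs : |⟪ω, b i⟫_ℝ| ≤ 1 := by
      simpa [hω, b.orthonormal.1 i] using abs_real_inner_le_norm ω (b i)
    rw [norm_mul, Complex.norm_exp_ofReal_mul_I, mul_one, Complex.norm_real, norm_mul]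
    exact mul_le_one₀ hcs (abs_nonneg _) hcs
  simp only [InnerProductSpace.laplacian_eq_iteratedFDeriv_orthonormalBasis _ b,
    iteratedFDeriv_charFun (memLp_id_unitSphereMeasure (E := E) (2 : ℕ)), Fin.prod_univ_two,
    Matrix.cons_val_zero, Matrix.cons_val_one, Complex.I_sq, neg_one_mul, Finset.sum_neg_distrib]
  rw [← integral_finsetSum _ fun i _ => hint i, charFun_apply]
  congr 1
  refine integral_congr_ae (ae_norm_eq_one_unitSphereMeasure.mono fun ω hω => ?_)
  have hparseval : ∑ i, ((⟪ω, b i⟫_ℝ * ⟪ω, b i⟫_ℝ : ℝ) : ℂ) = 1 := by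
    have := b.sum_inner_mul_inner ω ω
    rw [real_inner_self_eq_norm_sq, hω] at this
    simp only [real_inner_comm ω] at this ⊢
    exact_mod_cast this.trans (one_pow 2)
  simp only [← Finset.sum_mul, hparseval, one_mul]

end SphereFourierTransform

section BesselDecay

variable {V : Type*} [NormedAddCommGroup V] [InnerProductSpace ℝ V]

lemma norm_sq_add_norm_deriv_sq_le_of_perturbed_oscillator {h h' : ℝ → V} {κ : ℝ}
    (hh : ∀ r, 1 ≤ r → HasDerivAt h (h' r) r)
    (hh' : ∀ r, 1 ≤ r → HasDerivAt h' ((κ / r ^ 2 - 1) • h r) r) {r : ℝ} (hr : 1 ≤ r) :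
    ‖h r‖ ^ 2 + ‖h' r‖ ^ 2 ≤ exp |κ| * (‖h 1‖ ^ 2 + ‖h' 1‖ ^ 2) := by
  set L : ℝ → ℝ := fun s => (‖h s‖ ^ 2 + ‖h' s‖ ^ 2) * exp (|κ| / s)
  have hL : ∀ s, 1 ≤ s → HasDerivAt L
      ((2 * κ * ⟪h s, h' s⟫_ℝ - |κ| * (‖h s‖ ^ 2 + ‖h' s‖ ^ 2)) / s ^ 2 * exp (|κ| / s)) s := by
    intro s hs
    have hs0 : s ≠ 0 := by positivity
    have hexp := ((hasDerivAt_inv hs0).const_mul |κ|).exp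
    refine (((hh s hs).norm_sq.add (hh' s hs).norm_sq).mul hexp).congr_deriv ?_
    simp only [Pi.add_apply, inner_smul_right, real_inner_comm (h s)]
    field_simp
    ring
  have hanti : AntitoneOn L (Ici 1) := by
    refine antitoneOn_of_deriv_nonpos (convex_Ici 1)
      (fun s hs => (hL s hs).continuousAt.continuousWithinAt) ?_ ?_ <;>
      intro s hs <;> rw [interior_Ici] at hs
    · exact (hL s hs.out.le).differentiableAt.differentiableWithinAt
    · rw [(hL s hs.out.le).deriv]
      refine mul_nonpos_of_nonpos_of_nonneg (div_nonpos_of_nonpos_of_nonneg ?_ (sq_nonneg s))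
        (exp_pos _).le
      have hcs := abs_real_inner_le_norm (h s) (h' s)
      have hκ : κ * ⟪h s, h' s⟫_ℝ ≤ |κ| * (‖h s‖ * ‖h' s‖) :=
        (le_abs_self _).trans (by rw [abs_mul]; gcongr)
      nlinarith [two_mul_le_add_sq ‖h s‖ ‖h' s‖, abs_nonneg κ]
  calc ‖h r‖ ^ 2 + ‖h' r‖ ^ 2
      ≤ L r := le_mul_of_one_le_right (by positivity) (one_le_exp (by positivity))
    _ ≤ L 1 := hanti self_mem_Ici hr hr
    _ = exp |κ| * (‖h 1‖ ^ 2 + ‖h' 1‖ ^ 2) := by simp only [L, div_one]; ring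

/- Conjugating by `r ^ m` removes the first-order term of the equation. -/
lemma exists_rpow_mul_norm_le_of_bessel_ode {f f' f'' : ℝ → V} {m : ℝ}
    (hf : ∀ r, HasDerivAt f (f' r) r) (hf' : ∀ r, HasDerivAt f' (f'' r) r)
    (hode : ∀ r, r • f'' r + (2 * m) • f' r = -(r • f r)) :
    ∃ C, ∀ r, 1 ≤ r → r ^ m * ‖f r‖ ≤ C := by
  set h : ℝ → V := fun r => r ^ m • f r
  set h' : ℝ → V := fun r => r ^ m • f' r + (m * r ^ (m - 1)) • f r
  have hpow : ∀ (a r : ℝ), 1 ≤ r → HasDerivAt (fun r : ℝ => r ^ a) (a * r ^ (a - 1)) r :=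
    fun a r hr => hasDerivAt_rpow_const (.inl (by positivity))
  have hh : ∀ r, 1 ≤ r → HasDerivAt h (h' r) r := fun r hr => (hpow m r hr).smul (hf r)
  have hh' : ∀ r, 1 ≤ r → HasDerivAt h' (((m ^ 2 - m) / r ^ 2 - 1) • h r) r := by
    intro r hr
    have hr0 : 0 < r := by positivity
    refine (((hpow m r hr).smul (hf' r)).add
      (((hpow (m - 1) r hr).const_mul m).smul (hf r))).congr_deriv ?_
    have hf'' : f'' r = -f r - (2 * m / r) • f' r := by
      have := congrArg (r⁻¹ • ·) (hode r)
      simp only [smul_add, smul_neg, smul_smul, inv_mul_cancel₀ hr0.ne', one_smul] at this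
      rw [eq_sub_iff_add_eq, ← this]
      congr 2
      ring
    simp only [h, hf'', rpow_sub_one hr0.ne']
    module
  refine ⟨sqrt (exp |m ^ 2 - m| * (‖h 1‖ ^ 2 + ‖h' 1‖ ^ 2)), fun r hr => ?_⟩
  have hbound := norm_sq_add_norm_deriv_sq_le_of_perturbed_oscillator hh hh' hr
  calc r ^ m * ‖f r‖ = ‖h r‖ := by
        rw [norm_smul, norm_of_nonneg (rpow_nonneg (by positivity) m)]
    _ ≤ _ := le_sqrt_of_sq_le ((le_add_of_nonneg_right (sq_nonneg _)).trans hbound)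

end BesselDecay

section SphereDecay

variable (E : Type*) [NormedAddCommGroup E] [InnerProductSpace ℝ E] [FiniteDimensional ℝ E]
  [MeasurableSpace E] [BorelSpace E] [Nontrivial E]

lemma exists_norm_rpow_mul_norm_charFun_unitSphereMeasure_le :
    ∃ C, 0 ≤ C ∧ ∀ z : E, 1 ≤ ‖z‖ →
      ‖z‖ ^ (((finrank ℝ E : ℝ) - 1) / 2) * ‖charFun (unitSphereMeasure E) z‖ ≤ C := by
  set F := charFun (unitSphereMeasure E)
  have hF : ContDiff ℝ 2 F := contDiff_charFun_unitSphereMeasure 2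
  have hF' : ContDiff ℝ 1 (fderiv ℝ F) := hF.fderiv_right (by norm_num)
  obtain ⟨e, he⟩ := exists_norm_eq E zero_le_one
  have hray : ∀ r : ℝ, HasDerivAt (fun r : ℝ => r • e) e r := fun r => by
    simpa using (hasDerivAt_id r).smul_const e
  have hf : ∀ r : ℝ, HasDerivAt (fun r : ℝ => F (r • e)) (fderiv ℝ F (r • e) e) r := fun r =>
    ((hF.differentiable (by norm_num)) _).hasFDerivAt.comp_hasDerivAt r (hray r)
  have hf' : ∀ r : ℝ, HasDerivAt (fun r : ℝ => fderiv ℝ F (r • e) e)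
      (fderiv ℝ (fderiv ℝ F) (r • e) e e) r := fun r => by
    simpa using (((hF'.differentiable (by norm_num)) _).hasFDerivAt.comp_hasDerivAt r
      (hray r)).clm_apply (hasDerivAt_const r e)
  obtain ⟨C, hC⟩ := exists_rpow_mul_norm_le_of_bessel_ode
    (m := ((finrank ℝ E : ℝ) - 1) / 2) hf hf' fun r => by
      rw [mul_div_cancel₀ _ two_ne_zero, ← smul_neg, ← laplacian_charFun_unitSphereMeasure,
        smul_laplacian_of_radial hF (fun _ _ => charFun_unitSphereMeasure_eq_of_norm_eq) he]
  refine ⟨C, le_trans (by positivity) (hC 1 le_rfl), fun z hz => ?_⟩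
  rw [show F z = F (‖z‖ • e) from charFun_unitSphereMeasure_eq_of_norm_eq (by simp [norm_smul, he])]
  exact hC ‖z‖ hz

theorem exists_norm_charFun_unitSphereMeasure_le :
    ∃ C, 0 ≤ C ∧ ∀ z : E, ‖charFun (unitSphereMeasure E) z‖
      ≤ C * (1 + ‖z‖) ^ (-(((finrank ℝ E : ℝ) - 1) / 2)) := by
  obtain ⟨C, hC0, hC⟩ := exists_norm_rpow_mul_norm_charFun_unitSphereMeasure_le E
  set m : ℝ := ((finrank ℝ E : ℝ) - 1) / 2
  have hm : 0 ≤ m := by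
    have : (1 : ℝ) ≤ finrank ℝ E := by exact_mod_cast finrank_pos (R := ℝ) (M := E)
    simp only [m]; linarith
  set F := charFun (unitSphereMeasure E)
  set M := (unitSphereMeasure E).real univ
  refine ⟨2 ^ m * (C + M), by positivity, fun z => ?_⟩
  rw [rpow_neg (by positivity), ← div_eq_mul_inv, le_div_iff₀ (by positivity), mul_comm]
  rcases le_total 1 ‖z‖ with hz | hz
  · calc (1 + ‖z‖) ^ m * ‖F z‖ ≤ (2 * ‖z‖) ^ m * ‖F z‖ := by gcongr; linarith
      _ = 2 ^ m * (‖z‖ ^ m * ‖F z‖) := by rw [mul_rpow zero_le_two (norm_nonneg z), mul_assoc]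
      _ ≤ 2 ^ m * (C + M) := by
          gcongr
          exact (hC z hz).trans (le_add_of_nonneg_right measureReal_nonneg)
  · calc (1 + ‖z‖) ^ m * ‖F z‖ ≤ 2 ^ m * M := by
          gcongr
          · linarith
          · exact norm_charFun_le z
      _ ≤ 2 ^ m * (C + M) := by gcongr; linarith

end SphereDecay

section HalfLine

lemma norm_exp_I_mul_mul (t r : ℝ) : ‖Complex.exp (Complex.I * t * r)‖ = 1 := by
  simpa [mul_assoc] using Complex.norm_exp_I_mul_ofReal (t * r)

lemma integrable_exp_mul {g : ℝ → ℂ} (hg : Integrable g) (t : ℝ) :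
    Integrable fun r : ℝ => Complex.exp (Complex.I * t * r) * g r :=
  hg.bdd_mul (c := 1) (by fun_prop) (ae_of_all _ fun r => (norm_exp_I_mul_mul t r).le)

lemma sq_mul_integral_Ioi_exp_mul {h : 𝓢(ℝ, ℂ)} (h0 : h 0 = 0) (t : ℝ) :
    (t ^ 2 : ℂ) * ∫ r in Ioi (0 : ℝ), Complex.exp (Complex.I * t * r) * h r
      = -(deriv h 0 + ∫ r in Ioi (0 : ℝ), Complex.exp (Complex.I * t * r) * deriv (deriv h) r) := by
  set e : ℝ → ℂ := fun r => Complex.exp (Complex.I * t * r)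
  set h₁ := SchwartzMap.derivCLM ℝ ℂ h
  set h₂ := SchwartzMap.derivCLM ℝ ℂ h₁
  have he' : ∀ r : ℝ, HasDerivAt e (e r * (Complex.I * t)) r := fun r => by
    simpa using ((hasDerivAt_id r).ofReal_comp.const_mul (Complex.I * t)).cexp
  have hint : ∀ g : 𝓢(ℝ, ℂ), IntegrableOn (fun r => e r * g r) (Ioi 0) := fun g =>
    (integrable_exp_mul g.integrable t).integrableOn
  have hprim : ∀ r ∈ Ici (0 : ℝ), HasDerivAt (fun r => e r * (Complex.I * t * h r - h₁ r))
      (-(t ^ 2 : ℂ) * (e r * h r) - e r * h₂ r) r := fun r _ => by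
    refine ((he' r).mul (((h.hasDerivAt r).const_mul (Complex.I * t)).sub
      (h₁.hasDerivAt r))).congr_deriv ?_
    change e r * (Complex.I * t) * (Complex.I * t * h r - h₁ r)
      + e r * (Complex.I * t * h₁ r - h₂ r) = _
    linear_combination e r * t ^ 2 * h r * Complex.I_sq
  have hlim : Tendsto (fun r => e r * (Complex.I * t * h r - h₁ r)) atTop (𝓝 0) := by
    have hvanish : ∀ g : 𝓢(ℝ, ℂ), Tendsto g atTop (𝓝 0) := fun g =>
      g.toZeroAtInfty.zero_at_infty'.mono_left atTop_le_cocompact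
    refine squeeze_zero_norm (fun r => by rw [norm_mul, norm_exp_I_mul_mul, one_mul]) ?_
    simpa using (((hvanish h).const_mul (Complex.I * t)).sub (hvanish h₁)).norm
  have hparts := integral_Ioi_of_hasDerivAt_of_tendsto' hprim
    (((hint h).const_mul _).sub (hint h₂)) hlim
  rw [integral_sub ((hint h).const_mul _) (hint h₂), integral_const_mul] at hparts
  change (t ^ 2 : ℂ) * ∫ r in Ioi 0, e r * h r = -(h₁ 0 + ∫ r in Ioi 0, e r * h₂ r)
  simp only [h0, e, Complex.ofReal_zero, mul_zero, Complex.exp_zero] at hparts ⊢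
  linear_combination -hparts

lemma one_add_sq_mul_norm_integral_Ioi_exp_mul_le {h : 𝓢(ℝ, ℂ)} (h0 : h 0 = 0) (t : ℝ) :
    (1 + t ^ 2) * ‖∫ r in Ioi (0 : ℝ), Complex.exp (Complex.I * t * r) * h r‖
      ≤ (∫ r, ‖h r‖) + ‖deriv h 0‖ + ∫ r, ‖deriv (deriv h) r‖ := by
  set e : ℝ → ℂ := fun r => Complex.exp (Complex.I * t * r)
  have hnorm : ∀ g : 𝓢(ℝ, ℂ), ‖∫ r in Ioi 0, e r * g r‖ ≤ ∫ r, ‖g r‖ := fun g =>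
    calc ‖∫ r in Ioi 0, e r * g r‖ ≤ ∫ r in Ioi 0, ‖e r * g r‖ := norm_integral_le_integral_norm _
      _ = ∫ r in Ioi 0, ‖g r‖ := by simp only [e, norm_mul, norm_exp_I_mul_mul, one_mul]
      _ ≤ ∫ r, ‖g r‖ :=
        setIntegral_le_integral g.integrable.norm (ae_of_all _ fun _ => norm_nonneg _)
  have hnorm₂ : ‖∫ r in Ioi 0, e r * deriv (deriv h) r‖ ≤ ∫ r, ‖deriv (deriv h) r‖ :=
    hnorm (SchwartzMap.derivCLM ℝ ℂ (SchwartzMap.derivCLM ℝ ℂ h))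
  calc (1 + t ^ 2) * ‖∫ r in Ioi 0, e r * h r‖
      = ‖∫ r in Ioi 0, e r * h r‖ + ‖(t ^ 2 : ℂ) * ∫ r in Ioi 0, e r * h r‖ := by
        rw [norm_mul, norm_pow, Complex.norm_real, norm_eq_abs, sq_abs]; ring
    _ ≤ (∫ r, ‖h r‖) + (‖deriv h 0‖ + ∫ r, ‖deriv (deriv h) r‖) := by
        rw [sq_mul_integral_Ioi_exp_mul h0, norm_neg]
        exact add_le_add (hnorm h) ((norm_add_le _ _).trans (add_le_add_right hnorm₂ _))
    _ = _ := (add_assoc _ _ _).symm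

lemma exists_one_add_sq_mul_norm_integral_Ioi_exp_mul_pow_smul_le {N : ℕ} (hN : N ≠ 0) :
    ∃ (s : Finset (ℕ × ℕ)) (C : ℝ≥0), ∀ (h : 𝓢(ℝ, ℂ)) (t : ℝ),
      (1 + t ^ 2) * ‖∫ r in Ioi (0 : ℝ), Complex.exp (Complex.I * t * r) * (r ^ N • h r)‖
        ≤ C * s.sup (schwartzSeminormFamily ℝ ℝ ℂ) h := by
  set M : 𝓢(ℝ, ℂ) →L[ℝ] 𝓢(ℝ, ℂ) := SchwartzMap.smulLeftCLM ℂ fun r : ℝ => r ^ N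
  have hM : ∀ h r, M h r = r ^ N • h r := fun h r =>
    SchwartzMap.smulLeftCLM_apply_apply (by fun_prop) h r
  set D := SchwartzMap.derivCLM ℝ ℂ
  set I := SchwartzMap.toLpCLM ℝ ℂ 1 (volume : Measure ℝ)
  set B := SchwartzMap.toBoundedContinuousFunctionCLM ℝ ℝ ℂ
  set q : Seminorm ℝ 𝓢(ℝ, ℂ) := (normSeminorm ℝ _).comp (I ∘L M).toLinearMap
    + (normSeminorm ℝ _).comp (B ∘L D ∘L M).toLinearMap
    + (normSeminorm ℝ _).comp (I ∘L D ∘L D ∘L M).toLinearMap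
  have hq : Continuous q :=
    ((I ∘L M).continuous.norm.add (B ∘L D ∘L M).continuous.norm).add
      (I ∘L D ∘L D ∘L M).continuous.norm
  obtain ⟨s, C, -, hC⟩ := Seminorm.bound_of_continuous (schwartz_withSeminorms ℝ ℝ ℂ) q hq
  refine ⟨s, C, fun h t => le_trans ?_ (hC h)⟩
  simp only [← hM]
  refine (one_add_sq_mul_norm_integral_Ioi_exp_mul_le (by simp [hM, hN]) t).trans
    (add_le_add_three ?_ ?_ ?_)
  · exact (SchwartzMap.norm_toLp_one (f := M h) (μ := volume)).ge
  · exact (B (D (M h))).norm_coe_le_norm 0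
  · exact (SchwartzMap.norm_toLp_one (f := D (D (M h))) (μ := volume)).ge

end HalfLine

section IsometryRestriction

variable {D E V : Type*} [NormedAddCommGroup D] [NormedSpace ℝ D] [NormedAddCommGroup E]
  [NormedSpace ℝ E] [NormedAddCommGroup V] [NormedSpace ℝ V]

/-- Composition of a Schwartz function with a linear isometry; used to restrict a Schwartz
function to the lines through the origin. -/
def schwartzCompIsometry (L : D →ₗᵢ[ℝ] E) : 𝓢(E, V) →L[ℝ] 𝓢(D, V) :=
  SchwartzMap.compCLMOfAntilipschitz ℝ L.toContinuousLinearMap.hasTemperateGrowth L.antilipschitz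

lemma seminorm_schwartzCompIsometry_le (L : D →ₗᵢ[ℝ] E) (φ : 𝓢(E, V)) (k l : ℕ) :
    SchwartzMap.seminorm ℝ k l (schwartzCompIsometry L φ) ≤ SchwartzMap.seminorm ℝ k l φ := by
  refine SchwartzMap.seminorm_le_bound ℝ k l _ (apply_nonneg _ _) fun x => ?_
  have hcomp : iteratedFDeriv ℝ l (schwartzCompIsometry L φ) x
      = (iteratedFDeriv ℝ l φ (L x)).compContinuousLinearMap fun _ => L.toContinuousLinearMap :=
    L.toContinuousLinearMap.iteratedFDeriv_comp_right (φ.smooth ⊤) x (mod_cast le_top)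
  rw [hcomp, ← L.norm_map x]
  refine le_trans ?_ (SchwartzMap.le_seminorm ℝ k l φ (L x))
  gcongr
  refine (ContinuousMultilinearMap.norm_compContinuousLinearMap_le _ _).trans
    (mul_le_of_le_one_right (norm_nonneg _) (Finset.prod_le_one (fun _ _ => norm_nonneg _)
      fun _ _ => L.norm_toContinuousLinearMap_le))

end IsometryRestriction

section WaveEvolution

variable {E : Type*} [NormedAddCommGroup E] [InnerProductSpace ℝ E] [FiniteDimensional ℝ E]
  [MeasurableSpace E] [BorelSpace E]

/-- The half-wave `x ↦ ∫ e^{2πi⟨ξ, x⟩} e^{it|ξ|} f(ξ) dξ` whose initial datum has Fourier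
transform `f`. -/
def waveEvolution (f : E → ℂ) (t : ℝ) : E → ℂ :=
  𝓕⁻ fun ξ => Complex.exp (Complex.I * t * ‖ξ‖) * f ξ

/-- The Fourier extension operator of the unit sphere: the inverse Fourier transform of the
measure `a dσ`. -/
def fourierExtension (a : E → ℂ) (x : E) : ℂ :=
  ∫ ω, 𝐞 ⟪ω, x⟫_ℝ • a ω ∂unitSphereMeasure E

/-- The time-Fourier transform of `waveEvolution f`. The phase `e^{it|ξ|}` has frequency `τ` on the
sphere `|ξ| = 2πτ`, and the density is set to be `0` for `τ ≤ 0` by truncating the radius. -/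
def spectralDensity (f : E → ℂ) (τ : ℝ) (x : E) : ℂ :=
  (2 * π * (2 * π * max τ 0) ^ (finrank ℝ E - 1)) •
    fourierExtension (fun ω => f ((2 * π * max τ 0) • ω)) ((2 * π * max τ 0) • x)

lemma integrable_fourierChar_smul {f : E → ℂ} (hf : Integrable f) (x : E) :
    Integrable fun ξ => 𝐞 ⟪ξ, x⟫_ℝ • f ξ := by
  simpa using (VectorFourier.fourierIntegral_convergent_iff continuous_fourierChar
    (L := innerₗ E) continuous_inner (-x)).2 hf

lemma integrable_exp_norm_mul {f : E → ℂ} (hf : Integrable f) (t : ℝ) :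
    Integrable fun ξ => Complex.exp (Complex.I * t * ‖ξ‖) * f ξ :=
  hf.bdd_mul (by fun_prop) (ae_of_all _ fun ξ => (norm_exp_I_mul_mul t ‖ξ‖).le)

lemma continuous_waveEvolution {f : E → ℂ} (hf : Integrable f) (x : E) :
    Continuous fun t => waveEvolution f t x := by
  simp only [waveEvolution, Real.fourierInv_eq]
  refine continuous_of_dominated
    (fun t => (integrable_fourierChar_smul (integrable_exp_norm_mul hf t) x).aestronglyMeasurable)
    (fun t => ae_of_all _ fun ξ => ?_) hf.norm (ae_of_all _ fun ξ => by fun_prop)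
  rw [Circle.norm_smul, norm_mul, norm_exp_I_mul_mul, one_mul]

lemma exists_one_add_sq_mul_norm_integral_exp_norm_mul_le (hE : 1 < finrank ℝ E) (φ : 𝓢(E, ℂ)) :
    ∃ C, ∀ t : ℝ, (1 + t ^ 2) * ‖∫ ξ, Complex.exp (Complex.I * t * ‖ξ‖) * φ ξ‖ ≤ C := by
  have : Nontrivial E := nontrivial_of_finrank_pos (R := ℝ) (zero_lt_one.trans hE)
  obtain ⟨s, C, hC⟩ := exists_one_add_sq_mul_norm_integral_Ioi_exp_mul_pow_smul_le
    (N := finrank ℝ E - 1) (by omega)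
  set K : ℝ := C * s.sup (schwartzSeminormFamily ℝ E ℂ) φ
  refine ⟨K * (unitSphereMeasure E).real univ, fun t => ?_⟩
  have hray : ∀ ω : E, ‖ω‖ = 1 → ‖∫ r in Ioi (0 : ℝ), r ^ (finrank ℝ E - 1) •
      (Complex.exp (Complex.I * t * ‖r • ω‖) * φ (r • ω))‖ ≤ (1 + t ^ 2)⁻¹ * K := fun ω hω => by
    set g := schwartzCompIsometry (LinearIsometry.toSpanSingleton ℝ E hω) φ
    have hg : s.sup (schwartzSeminormFamily ℝ ℝ ℂ) g ≤ s.sup (schwartzSeminormFamily ℝ E ℂ) φ :=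
      Seminorm.finset_sup_apply_le (apply_nonneg _ _) fun i hi =>
        (seminorm_schwartzCompIsometry_le _ φ i.1 i.2).trans
          (Seminorm.le_finset_sup_apply (p := schwartzSeminormFamily ℝ E ℂ) hi)
    rw [le_inv_mul_iff₀ (by positivity)]
    refine le_trans (le_of_eq ?_) ((hC g t).trans (mul_le_mul_of_nonneg_left hg C.2))
    congr 2
    refine setIntegral_congr_fun measurableSet_Ioi fun r hr => ?_
    have hgr : g r = φ (r • ω) := rfl
    simp only [norm_smul, hω, mul_one, norm_of_nonneg (mem_Ioi.1 hr).le, hgr, mul_smul_comm]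
  rw [← le_inv_mul_iff₀ (by positivity), integral_eq_integral_unitSphereMeasure_integral_Ioi
    (integrable_exp_norm_mul φ.integrable t), ← mul_assoc]
  exact norm_integral_le_of_norm_le_const (ae_norm_eq_one_unitSphereMeasure.mono hray)

lemma exists_schwartz_eq_fourierChar_smul (f : 𝓢(E, ℂ)) (x : E) :
    ∃ φ : 𝓢(E, ℂ), ∀ ξ, φ ξ = 𝐞 ⟪ξ, x⟫_ℝ • f ξ := by
  refine ⟨𝓕 ((𝓕⁻ f).compSubConstCLM ℂ (-x)), fun ξ => ?_⟩
  have htranslate := congrFun (VectorFourier.fourierIntegral_comp_add_right 𝐞 volume (innerₗ E)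
    (𝓕⁻ f : 𝓢(E, ℂ)) x) ξ
  have hf : VectorFourier.fourierIntegral 𝐞 volume (innerₗ E) (𝓕⁻ f : 𝓢(E, ℂ)) = f := by
    change 𝓕 ⇑(𝓕⁻ f : 𝓢(E, ℂ)) = f
    rw [← SchwartzMap.fourier_coe, fourier_fourierInv_eq]
  rw [hf, innerₗ_apply_apply, real_inner_comm] at htranslate
  have hcomp : (𝓕⁻ f).compSubConstCLM ℂ (-x) = ⇑(𝓕⁻ f : 𝓢(E, ℂ)) ∘ fun v => v + x := by
    ext v; simp
  rw [← htranslate, SchwartzMap.fourier_coe, hcomp]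
  rfl

lemma integrable_waveEvolution (hE : 1 < finrank ℝ E) (f : 𝓢(E, ℂ)) (x : E) :
    Integrable fun t => waveEvolution f t x := by
  obtain ⟨φ, hφ⟩ := exists_schwartz_eq_fourierChar_smul f x
  obtain ⟨C, hC⟩ := exists_one_add_sq_mul_norm_integral_exp_norm_mul_le hE φ
  refine (integrable_inv_one_add_sq.mul_const C).mono'
    (continuous_waveEvolution f.integrable x).aestronglyMeasurable (ae_of_all _ fun t => ?_)
  rw [le_inv_mul_iff₀ (by positivity)]
  simpa only [waveEvolution, Real.fourierInv_eq, hφ, mul_smul_comm] using hC t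

lemma waveEvolution_eq_integral_Ioi [Nontrivial E] {f : E → ℂ} (hf : Integrable f) (t : ℝ) (x : E) :
    waveEvolution f t x = ∫ r in Ioi (0 : ℝ), Complex.exp (Complex.I * t * r) *
      (r ^ (finrank ℝ E - 1) • fourierExtension (fun ω => f (r • ω)) (r • x)) := by
  rw [waveEvolution, Real.fourierInv_eq, integral_eq_integral_Ioi_integral_unitSphereMeasure
    (integrable_fourierChar_smul (integrable_exp_norm_mul hf t) x)]
  refine setIntegral_congr_fun measurableSet_Ioi fun r hr => ?_
  rw [mul_smul_comm, fourierExtension, ← integral_const_mul]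
  congr 1
  refine integral_congr_ae (ae_norm_eq_one_unitSphereMeasure.mono fun ω hω => ?_)
  simp only [norm_smul, hω, mul_one, norm_of_nonneg (mem_Ioi.1 hr).le, mul_smul_comm,
    real_inner_smul_left, real_inner_smul_right]

lemma spectralDensity_of_nonpos (hE : 1 < finrank ℝ E) (f : E → ℂ) {τ : ℝ} (hτ : τ ≤ 0) (x : E) :
    spectralDensity f τ x = 0 := by
  simp [spectralDensity, max_eq_right hτ, Nat.sub_ne_zero_of_lt hE]

lemma waveEvolution_eq_fourierInv_spectralDensity (hE : 1 < finrank ℝ E) {f : E → ℂ}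
    (hf : Integrable f) (t : ℝ) (x : E) :
    waveEvolution f t x = 𝓕⁻ (fun τ => spectralDensity f τ x) t := by
  have : Nontrivial E := nontrivial_of_finrank_pos (R := ℝ) (zero_lt_one.trans hE)
  have hsupp : ∀ τ ∉ Ioi (0 : ℝ), 𝐞 ⟪τ, t⟫_ℝ • spectralDensity f τ x = 0 := fun τ hτ => by
    rw [spectralDensity_of_nonpos hE f (not_lt.1 hτ), smul_zero]
  have hscale := integral_comp_mul_left_Ioi' (fun r : ℝ => Complex.exp (Complex.I * t * r) *
    (r ^ (finrank ℝ E - 1) • fourierExtension (fun ω => f (r • ω)) (r • x))) 0 two_pi_pos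
  rw [mul_zero] at hscale
  rw [waveEvolution_eq_integral_Ioi hf, ← hscale, Real.fourierInv_eq,
    ← setIntegral_eq_integral_of_forall_compl_eq_zero hsupp, ← integral_smul]
  refine setIntegral_congr_fun measurableSet_Ioi fun τ hτ => ?_
  have hphase : (𝐞 ⟪τ, t⟫_ℝ : ℂ) = Complex.exp (Complex.I * t * (2 * π * τ : ℝ)) := by
    rw [Real.fourierChar_apply]; congr 1; simp; ring
  simp only [spectralDensity, max_eq_left (mem_Ioi.1 hτ).le, Circle.smul_def, hphase, mul_smul,
    smul_eq_mul, mul_smul_comm]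

end WaveEvolution

section Plancherel

variable {E V : Type*} [NormedAddCommGroup E] [InnerProductSpace ℝ E] [FiniteDimensional ℝ E]
  [MeasurableSpace E] [BorelSpace E] [NormedAddCommGroup V] [InnerProductSpace ℂ V]
  [CompleteSpace V] {f : E → V}

lemma fourier_fourierInv_eq_of_integrable_fourierInv (hcont : Continuous f) (hf : Integrable f)
    (hf' : Integrable (𝓕⁻ f)) : 𝓕 (𝓕⁻ f) = f := by
  refine hcont.fourier_fourierInv_eq hf ?_
  have : 𝓕 f = fun w => 𝓕⁻ f (-w) := by
    ext w; rw [Real.fourierInv_eq_fourier_neg, neg_neg]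
  rw [this]
  exact hf'.comp_neg

lemma integral_norm_sq_fourierInv (hcont : Continuous f) (hf : Integrable f)
    (hf' : Integrable (𝓕⁻ f)) : ∫ x, ‖𝓕⁻ f x‖ ^ 2 = ∫ ξ, ‖f ξ‖ ^ 2 := by
  have hparseval : ∫ ξ, innerSL ℂ (𝓕 (𝓕⁻ f) ξ) (f ξ) = ∫ x, innerSL ℂ (𝓕⁻ f x) (𝓕⁻ f x) := by
    have := VectorFourier.integral_sesq_fourierIntegral_eq_neg_flip (innerSL ℂ)
      (L := innerₗ E) continuous_fourierChar continuous_inner hf' hf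
    rw [flip_innerₗ] at this
    exact this
  rw [fourier_fourierInv_eq_of_integrable_fourierInv hcont hf hf'] at hparseval
  simp only [innerSL_apply_apply, inner_self_eq_norm_sq_to_K] at hparseval
  apply Complex.ofReal_injective
  rw [← integral_complex_ofReal, ← integral_complex_ofReal]
  simpa using hparseval.symm

end Plancherel

section SpectralDensity

lemma one_add_mul_norm_le_mul_one_add_mul_norm_sub {X : Type*} [SeminormedAddCommGroup X] {ρ : ℝ}
    (hρ : 0 ≤ ρ) (x y : X) : 1 + ρ * ‖x‖ ≤ (1 + ρ) * (1 + ‖y‖) * (1 + ρ * ‖x - y‖) := by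
  have hx : ρ * ‖x‖ ≤ ρ * ‖x - y‖ + ρ * ‖y‖ := by
    rw [← mul_add]; gcongr; exact norm_le_norm_sub_add x y
  have : 0 ≤ ρ * ‖x - y‖ * (ρ + ‖y‖ + ρ * ‖y‖) := by positivity
  linarith [norm_nonneg y]

variable {E : Type*} [NormedAddCommGroup E] [InnerProductSpace ℝ E] [FiniteDimensional ℝ E]
  [MeasurableSpace E] [BorelSpace E]

lemma continuous_spectralDensity {f : E → ℂ} (hf : Continuous f) {C : ℝ} (hC : ∀ ξ, ‖f ξ‖ ≤ C) :
    Continuous fun q : ℝ × E => spectralDensity f q.1 q.2 := by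
  have hcont : Continuous fun q : ℝ × E =>
      fourierExtension (fun ω => f ((2 * π * max q.1 0) • ω)) ((2 * π * max q.1 0) • q.2) :=
    continuous_of_dominated (fun q => Continuous.aestronglyMeasurable (by fun_prop))
      (fun q => ae_of_all _ fun ω => (Circle.norm_smul _ _).trans_le (hC _))
      (integrable_const C) (ae_of_all _ fun ω => by fun_prop)
  unfold spectralDensity
  fun_prop

lemma fourierExtension_fourier_eq_integral_charFun {u : E → ℂ} (hu : Integrable u) (ρ : ℝ)
    (x : E) : fourierExtension (fun ω => 𝓕 u (ρ • ω)) (ρ • x)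
      = ∫ y, charFun (unitSphereMeasure E) ((2 * π * ρ) • (x - y)) * u y := by
  have hphase : ∀ ω y : E, 𝐞 ⟪ω, ρ • x⟫_ℝ • 𝐞 (-⟪y, ρ • ω⟫_ℝ) • u y
      = Complex.exp (⟪ω, (2 * π * ρ) • (x - y)⟫_ℝ * Complex.I) * u y := fun ω y => by
    rw [smul_smul, ← AddChar.map_add_eq_mul, Circle.smul_def, Real.fourierChar_apply, smul_eq_mul]
    congr 3
    simp only [real_inner_smul_right, inner_sub_right, real_inner_comm y ω]
    push_cast; ring
  have hint : Integrable (fun q : E × E =>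
      Complex.exp (⟪q.1, (2 * π * ρ) • (x - q.2)⟫_ℝ * Complex.I) * u q.2)
      ((unitSphereMeasure E).prod volume) :=
    (hu.comp_snd _).bdd_mul (by fun_prop) (ae_of_all _ fun q =>
      (Complex.norm_exp_ofReal_mul_I _).le)
  simp only [fourierExtension, Real.fourier_eq, Circle.smul_def _ (∫ _, _), ← integral_smul]
  simp only [← Circle.smul_def, hphase]
  rw [integral_integral_swap hint]
  simp only [integral_mul_const, charFun_apply]

lemma coe_smulLeftCLM_one_add_norm_sq_rpow {V : Type*} [NormedAddCommGroup V]
    [InnerProductSpace ℝ V] (f : 𝓢(V, ℂ)) (s : ℝ) :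
    ⇑(SchwartzMap.smulLeftCLM ℂ (fun ξ : V => (1 + ‖ξ‖ ^ 2) ^ s) f)
      = fun ξ => (1 + ‖ξ‖ ^ 2) ^ s • f ξ :=
  funext <| SchwartzMap.smulLeftCLM_apply_apply
    (Function.hasTemperateGrowth_one_add_norm_sq_rpow _ s) f

lemma integrable_one_add_norm_rpow_mul_norm (u : 𝓢(E, ℂ)) {s : ℝ} (hs : 0 ≤ s) :
    Integrable fun y => (1 + ‖y‖) ^ s * ‖u y‖ := by
  have hbessel := SchwartzMap.integrable (μ := volume)
    (SchwartzMap.smulLeftCLM ℂ (fun y : E => (1 + ‖y‖ ^ 2) ^ s) u)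
  refine (hbessel.norm.const_mul (2 ^ s)).mono'
    (Continuous.aestronglyMeasurable (by fun_prop (disch := positivity))) (ae_of_all _ fun y => ?_)
  rw [coe_smulLeftCLM_one_add_norm_sq_rpow, norm_smul, norm_of_nonneg (by positivity),
    norm_of_nonneg (by positivity), ← mul_assoc, ← mul_rpow (by positivity) (by positivity)]
  gcongr
  linarith [sq_nonneg (‖y‖ - 1), sq_nonneg ‖y‖]

variable [Nontrivial E]

lemma exists_norm_fourierExtension_le (f : 𝓢(E, ℂ)) :
    ∃ C, 0 ≤ C ∧ ∀ (ρ : ℝ) (x : E), 0 ≤ ρ → ‖fourierExtension (fun ω => f (ρ • ω)) (ρ • x)‖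
      ≤ C * ((1 + ρ) / (1 + ρ * ‖x‖)) ^ (((finrank ℝ E : ℝ) - 1) / 2) := by
  set m : ℝ := ((finrank ℝ E : ℝ) - 1) / 2
  have hm : 0 ≤ m := by
    have : (1 : ℝ) ≤ finrank ℝ E := by exact_mod_cast finrank_pos (R := ℝ) (M := E)
    simp only [m]; linarith
  set u : 𝓢(E, ℂ) := 𝓕⁻ f
  have hfu : ⇑f = 𝓕 ⇑u := by rw [← SchwartzMap.fourier_coe, fourier_fourierInv_eq]
  obtain ⟨C, hC0, hC⟩ := exists_norm_charFun_unitSphereMeasure_le E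
  refine ⟨C * ∫ y, (1 + ‖y‖) ^ m * ‖u y‖, mul_nonneg hC0 (integral_nonneg fun y => by positivity),
    fun ρ x hρ => ?_⟩
  simp only [hfu]
  rw [fourierExtension_fourier_eq_integral_charFun u.integrable, mul_right_comm C,
    ← integral_const_mul]
  refine norm_integral_le_of_norm_le
    ((integrable_one_add_norm_rpow_mul_norm u hm).const_mul _) (ae_of_all _ fun y => ?_)
  have hpeetre : (1 + ‖(2 * π * ρ) • (x - y)‖) ^ (-m)
      ≤ ((1 + ρ) / (1 + ρ * ‖x‖)) ^ m * (1 + ‖y‖) ^ m := by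
    rw [rpow_neg (by positivity), ← inv_rpow (by positivity), ← mul_rpow (by positivity)
      (by positivity)]
    gcongr
    rw [inv_le_iff_one_le_mul₀ (by positivity), div_mul_eq_mul_div, div_mul_eq_mul_div,
      le_div_iff₀ (by positivity), one_mul, norm_smul, norm_of_nonneg (by positivity)]
    refine (one_add_mul_norm_le_mul_one_add_mul_norm_sub hρ x y).trans ?_
    gcongr
    exact le_mul_of_one_le_left hρ (by linarith [pi_gt_three])
  calc ‖charFun (unitSphereMeasure E) ((2 * π * ρ) • (x - y)) * u y‖
      ≤ C * (((1 + ρ) / (1 + ρ * ‖x‖)) ^ m * (1 + ‖y‖) ^ m) * ‖u y‖ := by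
        rw [norm_mul]; gcongr; exact (hC _).trans (by gcongr)
    _ = _ := by ring

end SpectralDensity

section SpectralDecay

lemma one_add_pow_three_div_rpow_le {m ρ a : ℝ} (hm : 0 ≤ m) (hρ : 0 ≤ ρ) (ha : 0 < a) :
    ((1 + ρ) ^ 3 / a) ^ m ≤ 2 ^ ((3 * m + 2) / 2) * (1 + ρ ^ 2) ^ ((3 * m + 2) / 2)
      * (1 + ρ) ^ (-2 : ℝ) * a ^ (-m) := by
  have hgain : (1 + ρ) ^ (3 * m + 2) ≤ (2 * (1 + ρ ^ 2)) ^ ((3 * m + 2) / 2) := by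
    rw [show 3 * m + 2 = 2 * ((3 * m + 2) / 2) by ring, rpow_mul (by positivity), rpow_two,
      mul_div_cancel_left₀ _ two_ne_zero]
    gcongr
    linarith [sq_nonneg (ρ - 1)]
  rw [← mul_rpow (by positivity) (by positivity), div_rpow (by positivity) ha.le,
    ← rpow_natCast, ← rpow_mul (by positivity), rpow_neg ha.le, ← div_eq_mul_inv]
  gcongr
  calc (1 + ρ) ^ ((3 : ℕ) * m) = (1 + ρ) ^ (3 * m + 2) * (1 + ρ) ^ (-2 : ℝ) := by
        rw [← rpow_add (by positivity)]; push_cast; congr 1; ring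
    _ ≤ _ := by gcongr

variable {E : Type*} [NormedAddCommGroup E] [InnerProductSpace ℝ E] [FiniteDimensional ℝ E]
  [MeasurableSpace E] [BorelSpace E]

lemma spectralDensity_smul_norm (φ : ℝ → ℝ) (f : E → ℂ) (τ : ℝ) (x : E) :
    spectralDensity (fun ξ => φ ‖ξ‖ • f ξ) τ x
      = φ (2 * π * max τ 0) • spectralDensity f τ x := by
  have hsphere : fourierExtension
        (fun ω => φ ‖(2 * π * max τ 0) • ω‖ • f ((2 * π * max τ 0) • ω))
      = φ (2 * π * max τ 0) • fourierExtension (fun ω => f ((2 * π * max τ 0) • ω)) := by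
    ext y
    rw [Pi.smul_apply, fourierExtension, fourierExtension, ← integral_smul]
    refine integral_congr_ae (ae_norm_eq_one_unitSphereMeasure.mono fun ω hω => ?_)
    dsimp only
    rw [norm_smul, hω, mul_one, norm_of_nonneg (by positivity), smul_comm]
  rw [spectralDensity, spectralDensity, hsphere, Pi.smul_apply, smul_comm]

variable [Nontrivial E]

lemma exists_norm_spectralDensity_le_one_add_rpow (f : 𝓢(E, ℂ)) :
    ∃ C, 0 ≤ C ∧ ∀ τ x, 0 ≤ τ → ‖spectralDensity f τ x‖
      ≤ C * ((1 + 2 * π * τ) ^ 3 / (1 + ‖x‖)) ^ (((finrank ℝ E : ℝ) - 1) / 2) := by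
  obtain ⟨C, hC0, hC⟩ := exists_norm_fourierExtension_le f
  refine ⟨2 * π * C, by positivity, fun τ x hτ => ?_⟩
  set m : ℝ := ((finrank ℝ E : ℝ) - 1) / 2
  have hm : ((finrank ℝ E - 1 : ℕ) : ℝ) = 2 * m := by
    rw [Nat.cast_pred finrank_pos]; simp only [m]; ring
  have hm0 : 0 ≤ m := by linarith [(finrank ℝ E - 1).cast_nonneg (α := ℝ)]
  rw [spectralDensity, max_eq_left hτ]
  have hρ : 0 ≤ 2 * π * τ := by positivity
  generalize 2 * π * τ = ρ at hρ ⊢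
  have hbase : ρ ^ 2 * ((1 + ρ) / (1 + ρ * ‖x‖)) ≤ (1 + ρ) ^ 3 / (1 + ‖x‖) := by
    have hcross : ρ * (1 + ‖x‖) ≤ (1 + ρ) * (1 + ρ * ‖x‖) := by
      linarith [mul_nonneg (mul_nonneg hρ hρ) (norm_nonneg x)]
    rw [mul_div_assoc', div_le_div_iff₀ (by positivity) (by positivity)]
    calc ρ ^ 2 * (1 + ρ) * (1 + ‖x‖) = ρ * (1 + ρ) * (ρ * (1 + ‖x‖)) := by ring
      _ ≤ (1 + ρ) * (1 + ρ) * ((1 + ρ) * (1 + ρ * ‖x‖)) := by gcongr; linarith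
      _ = (1 + ρ) ^ 3 * (1 + ρ * ‖x‖) := by ring
  calc ‖(2 * π * ρ ^ (finrank ℝ E - 1)) • fourierExtension (fun ω => f (ρ • ω)) (ρ • x)‖
      ≤ 2 * π * ρ ^ (finrank ℝ E - 1) * (C * ((1 + ρ) / (1 + ρ * ‖x‖)) ^ m) := by
        rw [norm_smul, norm_of_nonneg (by positivity)]; gcongr; exact hC ρ x hρ
    _ = 2 * π * C * (ρ ^ 2 * ((1 + ρ) / (1 + ρ * ‖x‖))) ^ m := by
        rw [mul_rpow (by positivity) (by positivity), ← rpow_natCast, hm, ← rpow_natCast ρ 2,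
          ← rpow_mul hρ]
        push_cast; ring
    _ ≤ _ := by gcongr

lemma exists_rpow_mul_norm_spectralDensity_le (f : 𝓢(E, ℂ)) (s : ℝ) :
    ∃ C, 0 ≤ C ∧ ∀ τ x, 0 ≤ τ → (1 + (2 * π * τ) ^ 2) ^ s * ‖spectralDensity f τ x‖
      ≤ C * ((1 + 2 * π * τ) ^ 3 / (1 + ‖x‖)) ^ (((finrank ℝ E : ℝ) - 1) / 2) := by
  obtain ⟨C, hC0, hC⟩ := exists_norm_spectralDensity_le_one_add_rpow
    (SchwartzMap.smulLeftCLM ℂ (fun ξ : E => (1 + ‖ξ‖ ^ 2) ^ s) f)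
  refine ⟨C, hC0, fun τ x hτ => ?_⟩
  have hbound := hC τ x hτ
  rwa [coe_smulLeftCLM_one_add_norm_sq_rpow, spectralDensity_smul_norm fun ρ => (1 + ρ ^ 2) ^ s,
    max_eq_left hτ, norm_smul, norm_of_nonneg (by positivity)] at hbound

lemma exists_norm_spectralDensity_le (hE : 1 < finrank ℝ E) (f : 𝓢(E, ℂ)) :
    ∃ C, 0 ≤ C ∧ ∀ τ x, ‖spectralDensity f τ x‖
      ≤ C * (1 + |τ|) ^ (-2 : ℝ) * (1 + ‖x‖) ^ (-(((finrank ℝ E : ℝ) - 1) / 2)) := by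
  set m : ℝ := ((finrank ℝ E : ℝ) - 1) / 2
  have hm : 0 ≤ m := by
    have : (1 : ℝ) ≤ finrank ℝ E := by exact_mod_cast hE.le
    simp only [m]; linarith
  obtain ⟨C, hC0, hC⟩ := exists_rpow_mul_norm_spectralDensity_le f ((3 * m + 2) / 2)
  refine ⟨C * 2 ^ ((3 * m + 2) / 2), by positivity, fun τ x => ?_⟩
  rcases le_or_gt τ 0 with hτ | hτ
  · rw [spectralDensity_of_nonpos hE f hτ, norm_zero]; positivity
  have hbound := (hC τ x hτ.le).trans (mul_le_mul_of_nonneg_left (one_add_pow_three_div_rpow_le hm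
    (by positivity : 0 ≤ 2 * π * τ) (by positivity : 0 < 1 + ‖x‖)) hC0)
  have hτρ : τ ≤ 2 * π * τ := le_mul_of_one_le_left hτ.le (by linarith [pi_gt_three])
  rw [abs_of_pos hτ]
  refine le_of_mul_le_mul_left (hbound.trans ?_)
    (by positivity : 0 < (1 + (2 * π * τ) ^ 2) ^ ((3 * m + 2) / 2))
  calc _ = (1 + (2 * π * τ) ^ 2) ^ ((3 * m + 2) / 2) * (C * 2 ^ ((3 * m + 2) / 2)
        * (1 + 2 * π * τ) ^ (-2 : ℝ) * (1 + ‖x‖) ^ (-m)) := by ring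
    _ ≤ _ := by
        gcongr _ * (_ * ?_ * _)
        exact rpow_le_rpow_of_nonpos (by positivity) (by linarith) (by norm_num)

end SpectralDecay

section TimeFourierTransform

variable {E : Type*} [NormedAddCommGroup E] [InnerProductSpace ℝ E] [FiniteDimensional ℝ E]
  [MeasurableSpace E] [BorelSpace E]

lemma continuous_spectralDensity_schwartzMap (f : 𝓢(E, ℂ)) :
    Continuous fun q : ℝ × E => spectralDensity f q.1 q.2 :=
  continuous_spectralDensity f.continuous fun ξ =>
    f.toBoundedContinuousFunction.norm_coe_le_norm ξ

lemma integrable_spectralDensity (hE : 1 < finrank ℝ E) (f : 𝓢(E, ℂ)) (x : E) :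
    Integrable fun τ => spectralDensity f τ x := by
  have := nontrivial_of_finrank_pos (zero_lt_one.trans hE)
  obtain ⟨C, -, hC⟩ := exists_norm_spectralDensity_le hE f
  have hdecay : Integrable fun τ : ℝ => (1 + |τ|) ^ (-2 : ℝ) := by
    simpa using integrable_one_add_norm (E := ℝ) (μ := volume) (r := 2) (by simp)
  exact ((hdecay.const_mul C).mul_const _).mono'
    ((continuous_spectralDensity_schwartzMap f).comp (.prodMk_left x)).aestronglyMeasurable
    (ae_of_all _ fun τ => hC τ x)

lemma integrable_fourierInv_spectralDensity (hE : 1 < finrank ℝ E) (f : 𝓢(E, ℂ)) (x : E) :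
    Integrable (𝓕⁻ fun τ => spectralDensity f τ x) :=
  (integrable_waveEvolution hE f x).congr <| ae_of_all _ fun t =>
    waveEvolution_eq_fourierInv_spectralDensity hE f.integrable t x

lemma fourier_waveEvolution (hE : 1 < finrank ℝ E) (f : 𝓢(E, ℂ)) (τ : ℝ) (x : E) :
    𝓕 (fun t => waveEvolution f t x) τ = spectralDensity f τ x := by
  simp only [waveEvolution_eq_fourierInv_spectralDensity hE f.integrable]
  exact congr_fun (fourier_fourierInv_eq_of_integrable_fourierInv
    ((continuous_spectralDensity_schwartzMap f).comp (.prodMk_left x))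
    (integrable_spectralDensity hE f x) (integrable_fourierInv_spectralDensity hE f x)) τ

lemma integral_norm_sq_waveEvolution (hE : 1 < finrank ℝ E) (f : 𝓢(E, ℂ)) (x : E) :
    ∫ t, ‖waveEvolution f t x‖ ^ 2 = ∫ τ, ‖spectralDensity f τ x‖ ^ 2 := by
  simp only [waveEvolution_eq_fourierInv_spectralDensity hE f.integrable]
  exact integral_norm_sq_fourierInv
    ((continuous_spectralDensity_schwartzMap f).comp (.prodMk_left x))
    (integrable_spectralDensity hE f x) (integrable_fourierInv_spectralDensity hE f x)

lemma memLp_one_add_norm_rpow_neg {X : Type*} [NormedAddCommGroup X] [NormedSpace ℝ X]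
    [FiniteDimensional ℝ X] [MeasurableSpace X] [BorelSpace X] (μ : Measure X) [μ.IsAddHaarMeasure]
    {s p : ℝ} (hp : 0 < p) (hsp : (finrank ℝ X : ℝ) < s * p) :
    MemLp (fun x => (1 + ‖x‖) ^ (-s)) (.ofReal p) μ := by
  rw [← integrable_norm_rpow_iff (Measurable.aestronglyMeasurable (by fun_prop))
    (by simpa using hp) ENNReal.ofReal_ne_top, ENNReal.toReal_ofReal hp.le]
  convert integrable_one_add_norm (μ := μ) hsp using 2 with x
  rw [norm_of_nonneg (by positivity), ← rpow_mul (by positivity), neg_mul]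

lemma eLpNorm_eLpNorm_spectralDensity_lt_top (hE : 1 < finrank ℝ E) (f : 𝓢(E, ℂ)) {r : ℝ}
    (hr : 0 < r) (hr' : (finrank ℝ E : ℝ) < ((finrank ℝ E : ℝ) - 1) / 2 * r) :
    eLpNorm (fun τ => eLpNorm (spectralDensity f τ) (.ofReal r) volume) 2 volume < ⊤ := by
  have := nontrivial_of_finrank_pos (zero_lt_one.trans hE)
  obtain ⟨C, hC0, hC⟩ := exists_norm_spectralDensity_le hE f
  set m : ℝ := ((finrank ℝ E : ℝ) - 1) / 2
  have hspace := memLp_one_add_norm_rpow_neg (volume : Measure E) hr hr'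
  have htime : MemLp (fun τ : ℝ => (1 + ‖τ‖) ^ (-2 : ℝ)) 2 := by
    simpa using memLp_one_add_norm_rpow_neg (X := ℝ) volume (s := 2) two_pos (by norm_num)
  have hslice : ∀ τ, eLpNorm (spectralDensity f τ) (.ofReal r) volume
      ≤ .ofReal C * eLpNorm (fun x : E => (1 + ‖x‖) ^ (-m)) (.ofReal r) volume
        * ‖(1 + ‖τ‖) ^ (-2 : ℝ)‖ₑ := fun τ => by
    refine (eLpNorm_le_mul_eLpNorm_of_ae_le_mul (g := fun x : E => (1 + ‖x‖) ^ (-m))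
      (c := C * (1 + ‖τ‖) ^ (-2 : ℝ)) (ae_of_all _ fun x => ?_) _).trans_eq ?_
    · rw [norm_of_nonneg (r := (1 + ‖x‖) ^ (-m)) (by positivity)]; exact hC τ x
    · rw [ENNReal.ofReal_mul hC0, Real.enorm_of_nonneg (by positivity), mul_right_comm]
  refine (eLpNorm_le_mul_eLpNorm_of_ae_le_mul'' _ htime.1 (ae_of_all _ hslice)).trans_lt ?_
  exact ENNReal.mul_lt_top (ENNReal.mul_lt_top ENNReal.ofReal_lt_top hspace.2) htime.2

end TimeFourierTransform

section Bernstein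

lemma eLpNorm_le_of_enorm_le_mul_eLpNorm {α ε : Type*} [MeasurableSpace α] {μ : Measure α}
    [TopologicalSpace ε] [ContinuousENorm ε] {f : α → ε} {r p : ℝ} (hr : 0 < r) (hrp : r ≤ p)
    {C : ℝ≥0∞} (hfm : AEStronglyMeasurable f μ)
    (hf : ∀ᵐ x ∂μ, ‖f x‖ₑ ≤ C * eLpNorm f (.ofReal r) μ) :
    eLpNorm f (.ofReal p) μ ≤ C ^ (1 - r / p) * eLpNorm f (.ofReal r) μ := by
  have hp : 0 < p := hr.trans_le hrp
  set N := eLpNorm f (.ofReal r) μ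
  have hN : ∫⁻ x, ‖f x‖ₑ ^ r ∂μ = N ^ r := by
    simp only [N]
    rw [eLpNorm_eq_lintegral_rpow_enorm_toReal (by simpa using hr) ENNReal.ofReal_ne_top,
      ENNReal.toReal_ofReal hr.le, ← ENNReal.rpow_mul, one_div, inv_mul_cancel₀ hr.ne',
      ENNReal.rpow_one]
  rw [eLpNorm_eq_lintegral_rpow_enorm_toReal (by simpa using hp) ENNReal.ofReal_ne_top,
    ENNReal.toReal_ofReal hp.le]
  calc (∫⁻ x, ‖f x‖ₑ ^ p ∂μ) ^ (1 / p)
      ≤ (∫⁻ x, (C * N) ^ (p - r) * ‖f x‖ₑ ^ r ∂μ) ^ (1 / p) := by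
        gcongr ?_ ^ _
        refine lintegral_mono_ae (hf.mono fun x hx => ?_)
        rw [← sub_add_cancel p r, ENNReal.rpow_add_of_nonneg _ _ (sub_nonneg.2 hrp) hr.le,
          add_sub_cancel_right]
        gcongr
    _ = ((C * N) ^ (p - r) * N ^ r) ^ (1 / p) := by
        rw [lintegral_const_mul'' _ (hfm.enorm.pow_const r), hN]
    _ = C ^ (1 - r / p) * N := by
        rw [ENNReal.mul_rpow_of_nonneg _ _ (sub_nonneg.2 hrp), mul_assoc,
          ← ENNReal.rpow_add_of_nonneg _ _ (sub_nonneg.2 hrp) hr.le, sub_add_cancel,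
          ENNReal.mul_rpow_of_nonneg _ _ (by positivity), ← ENNReal.rpow_mul, ← ENNReal.rpow_mul,
          mul_one_div_cancel hp.ne', ENNReal.rpow_one, mul_one_div, sub_div, div_self hp.ne']

lemma enorm_integral_mul_comp_sub_left_le {G 𝕜 : Type*} [AddGroup G] [MeasurableSpace G]
    [MeasurableAdd G] [MeasurableNeg G] {μ : Measure G} [μ.IsAddLeftInvariant] [μ.IsNegInvariant]
    [RCLike 𝕜] {φ g : G → 𝕜} (hφ : AEStronglyMeasurable φ μ) (hg : AEStronglyMeasurable g μ)
    {q r : ℝ≥0∞} [ENNReal.HolderConjugate q r] (x : G) :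
    ‖∫ y, φ y * g (x - y) ∂μ‖ₑ ≤ eLpNorm φ q μ * eLpNorm g r μ :=
  have hsub := μ.measurePreserving_sub_left x
  calc ‖∫ y, φ y * g (x - y) ∂μ‖ₑ ≤ eLpNorm (φ • (g ∘ (x - ·))) 1 μ := by
        rw [eLpNorm_one_eq_lintegral_enorm]
        exact enorm_integral_le_lintegral_enorm _
    _ ≤ eLpNorm φ q μ * eLpNorm (g ∘ (x - ·)) r μ :=
        eLpNorm_smul_le_mul_eLpNorm (hg.comp_measurePreserving hsub) hφ
    _ = eLpNorm φ q μ * eLpNorm g r μ := by rw [eLpNorm_comp_measurePreserving hg hsub]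

variable {E : Type*} [NormedAddCommGroup E] [InnerProductSpace ℝ E] [FiniteDimensional ℝ E]
  [MeasurableSpace E] [BorelSpace E]

lemma eLpNorm_comp_smul {F : Type*} [NormedAddCommGroup F] (μ : Measure E) [μ.IsAddHaarMeasure]
    (f : E → F) {ρ : ℝ} (hρ : 0 < ρ) {p : ℝ} (hp : 0 < p) :
    eLpNorm (fun x => f (ρ • x)) (.ofReal p) μ
      = .ofReal (ρ ^ (-(finrank ℝ E / p))) * eLpNorm f (.ofReal p) μ := by
  have hmap := (Homeomorph.smulOfNeZero ρ hρ.ne').measurableEmbedding.eLpNorm_map_measure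
    (μ := μ) (g := f) (p := .ofReal p)
  have hsmul : μ.map (Homeomorph.smulOfNeZero ρ hρ.ne')
      = ENNReal.ofReal (ρ ^ (-(finrank ℝ E : ℝ))) • μ := by
    rw [rpow_neg hρ.le, rpow_natCast, ← abs_of_pos (by positivity : 0 < (ρ ^ finrank ℝ E)⁻¹)]
    exact μ.map_addHaar_smul hρ.ne'
  rw [hsmul, eLpNorm_smul_measure_of_ne_top ENNReal.ofReal_ne_top, smul_eq_mul] at hmap
  rw [← Function.comp_def f (ρ • ·)]
  refine hmap.symm.trans ?_
  rw [one_div, ENNReal.toReal_inv, ENNReal.toReal_ofReal hp.le,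
    ENNReal.ofReal_rpow_of_pos (by positivity), ← rpow_mul hρ.le, neg_mul, div_eq_mul_inv]

lemma exists_schwartzMap_fourier_eq_one (R : ℝ) :
    ∃ φ : 𝓢(E, ℂ), ∀ ξ, ‖ξ‖ ≤ R → 𝓕 ⇑φ ξ = 1 := by
  let b : ContDiffBump (0 : E) :=
    ⟨max R 1, max R 1 + 1, lt_max_of_lt_right one_pos, lt_add_one _⟩
  let χ : 𝓢(E, ℂ) := HasCompactSupport.toSchwartzMap (f := fun ξ => (b ξ : ℂ))
    (b.hasCompactSupport.comp_left Complex.ofReal_zero) (Complex.ofRealCLM.contDiff.comp b.contDiff)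
  refine ⟨𝓕⁻ χ, fun ξ hξ => ?_⟩
  rw [← SchwartzMap.fourier_coe, fourier_fourierInv_eq]
  exact congr_arg Complex.ofReal
    (b.one_of_mem_closedBall (mem_closedBall_zero_iff.2 (hξ.trans (le_max_left _ _))))

lemma continuous_fourierExtension {a : E → ℂ} (ha : Integrable a (unitSphereMeasure E)) :
    Continuous (fourierExtension a) :=
  continuous_of_dominated (fun x => Continuous.aestronglyMeasurable (by fun_prop) |>.smul ha.1)
    (fun x => ae_of_all _ fun ω => (Circle.norm_smul _ _).le) ha.norm
    (ae_of_all _ fun ω => by fun_prop)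

lemma integral_mul_fourierExtension_sub {φ a : E → ℂ} (hφ : Integrable φ)
    (ha : Integrable a (unitSphereMeasure E)) (x : E) :
    ∫ y, φ y * fourierExtension a (x - y) = fourierExtension (fun ω => 𝓕 φ ω * a ω) x := by
  have hphase : ∀ ω y : E, φ y * (𝐞 ⟪ω, x - y⟫_ℝ • a ω)
      = 𝐞 ⟪ω, x⟫_ℝ • ((𝐞 (-⟪y, ω⟫_ℝ) • φ y) * a ω) := fun ω y => by
    rw [inner_sub_right, sub_eq_add_neg, AddChar.map_add_eq_mul, real_inner_comm ω y]
    simp only [Circle.smul_def, smul_eq_mul, Circle.coe_mul]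
    ring
  have hinner : ∀ ω : E, ∫ y, φ y * (𝐞 ⟪ω, x - y⟫_ℝ • a ω)
      = 𝐞 ⟪ω, x⟫_ℝ • (𝓕 φ ω * a ω) := fun ω => by
    simp only [hphase, Circle.smul_def _ (_ * _)]
    rw [integral_smul, integral_mul_const, Real.fourier_eq]
  have hint : Integrable (fun q : E × E => φ q.1 * (𝐞 ⟪q.2, x - q.1⟫_ℝ • a q.2))
      (volume.prod (unitSphereMeasure E)) :=
    (hφ.mul_prod ha).mono
      (hφ.1.comp_fst.mul ((Continuous.aestronglyMeasurable (by fun_prop)).smul ha.1.comp_snd))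
      (ae_of_all _ fun q => by rw [norm_mul, norm_mul, Circle.norm_smul])
  simp only [fourierExtension, ← integral_const_mul]
  rw [integral_integral_swap hint]
  simp only [hinner]

lemma fourierExtension_eq_integral_mul_sub {φ a : E → ℂ} (hφ : Integrable φ)
    (hφ_one : ∀ ω, ‖ω‖ = 1 → 𝓕 φ ω = 1) (ha : Integrable a (unitSphereMeasure E)) (x : E) :
    fourierExtension a x = ∫ y, φ y * fourierExtension a (x - y) := by
  rw [integral_mul_fourierExtension_sub hφ ha]
  refine integral_congr_ae (ae_norm_eq_one_unitSphereMeasure.mono fun ω hω => ?_)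
  dsimp only
  rw [hφ_one ω hω, one_mul]

lemma exists_enorm_fourierExtension_le (E : Type*) [NormedAddCommGroup E] [InnerProductSpace ℝ E]
    [FiniteDimensional ℝ E] [MeasurableSpace E] [BorelSpace E] {r : ℝ≥0∞} (hr : 1 ≤ r) :
    ∃ C ≠ ⊤, ∀ a : E → ℂ, Integrable a (unitSphereMeasure E) → ∀ x,
      ‖fourierExtension a x‖ₑ ≤ C * eLpNorm (fourierExtension a) r volume := by
  obtain ⟨φ, hφ⟩ := exists_schwartzMap_fourier_eq_one (E := E) 1
  have hqr : ENNReal.HolderConjugate r.conjExponent r :=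
    (ENNReal.HolderConjugate.conjExponent hr).symm
  refine ⟨eLpNorm φ r.conjExponent volume, (φ.memLp _ _).eLpNorm_ne_top, fun a ha x => ?_⟩
  have hreproduce := fourierExtension_eq_integral_mul_sub φ.integrable (fun ω hω => hφ ω hω.le) ha x
  exact (congr_arg enorm hreproduce).trans_le
    (enorm_integral_mul_comp_sub_left_le φ.continuous.aestronglyMeasurable
      (continuous_fourierExtension ha).aestronglyMeasurable x)

lemma exists_eLpNorm_fourierExtension_le (E : Type*) [NormedAddCommGroup E] [InnerProductSpace ℝ E]
    [FiniteDimensional ℝ E] [MeasurableSpace E] [BorelSpace E] {r p : ℝ} (hr : 1 ≤ r)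
    (hrp : r ≤ p) :
    ∃ C ≠ ⊤, ∀ a : E → ℂ, Integrable a (unitSphereMeasure E) →
      eLpNorm (fourierExtension a) (.ofReal p) volume
        ≤ C * eLpNorm (fourierExtension a) (.ofReal r) volume := by
  obtain ⟨C, hC, hbound⟩ := exists_enorm_fourierExtension_le E (ENNReal.one_le_ofReal.2 hr)
  have hr0 : 0 < r := zero_lt_one.trans_le hr
  exact ⟨C ^ (1 - r / p), ENNReal.rpow_ne_top_of_nonneg
    (sub_nonneg.2 (div_le_one_of_le₀ hrp (hr0.le.trans hrp))) hC,
    fun a ha => eLpNorm_le_of_enorm_le_mul_eLpNorm hr0 hrp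
      (continuous_fourierExtension ha).aestronglyMeasurable (ae_of_all _ (hbound a ha))⟩

lemma eLpNorm_spectralDensity (f : E → ℂ) {τ q : ℝ} (hτ : 0 < τ) (hq : 0 < q) :
    eLpNorm (spectralDensity f τ) (.ofReal q) volume
      = ‖2 * π * (2 * π * τ) ^ (finrank ℝ E - 1)‖ₑ * (.ofReal ((2 * π * τ) ^ (-(finrank ℝ E / q)))
        * eLpNorm (fourierExtension fun ω => f ((2 * π * τ) • ω)) (.ofReal q) volume) := by
  have hdensity : spectralDensity f τ = (2 * π * (2 * π * τ) ^ (finrank ℝ E - 1)) •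
      fun x => fourierExtension (fun ω => f ((2 * π * τ) • ω)) ((2 * π * τ) • x) := by
    ext x
    rw [spectralDensity, max_eq_left hτ.le, Pi.smul_apply]
  rw [hdensity, eLpNorm_const_smul, eLpNorm_comp_smul volume _ (by positivity) hq]

lemma exists_eLpNorm_spectralDensity_le (E : Type*) [NormedAddCommGroup E] [InnerProductSpace ℝ E]
    [FiniteDimensional ℝ E] [MeasurableSpace E] [BorelSpace E] {r p : ℝ} (hr : 1 ≤ r)
    (hrp : r ≤ p) :
    ∃ C ≠ ⊤, ∀ (f : 𝓢(E, ℂ)) (τ : ℝ), 0 < τ →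
      eLpNorm (spectralDensity f τ) (.ofReal p) volume
        ≤ C * .ofReal ((2 * π * τ) ^ (finrank ℝ E * (1 / r - 1 / p)))
          * eLpNorm (spectralDensity f τ) (.ofReal r) volume := by
  obtain ⟨C, hC, hbound⟩ := exists_eLpNorm_fourierExtension_le E hr hrp
  refine ⟨C, hC, fun f τ hτ => ?_⟩
  have hr0 : 0 < r := one_pos.trans_le hr
  have hρ : 0 < 2 * π * τ := by positivity
  rw [eLpNorm_spectralDensity _ hτ (hr0.trans_le hrp), eLpNorm_spectralDensity _ hτ hr0]
  set ρ := 2 * π * τ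
  set a : E → ℂ := fun ω => f (ρ • ω)
  have ha : Integrable a (unitSphereMeasure E) :=
    .of_bound (f.continuous.comp (continuous_const_smul ρ)).aestronglyMeasurable
      ‖f.toBoundedContinuousFunction‖
      (ae_of_all _ fun ω => f.toBoundedContinuousFunction.norm_coe_le_norm (ρ • ω))
  have hexp : ρ ^ (-(finrank ℝ E / p))
      = ρ ^ (finrank ℝ E * (1 / r - 1 / p)) * ρ ^ (-(finrank ℝ E / r)) := by
    rw [← rpow_add hρ]
    ring_nf
  rw [hexp, ENNReal.ofReal_mul (by positivity)]
  calc _ ≤ ‖2 * π * ρ ^ (finrank ℝ E - 1)‖ₑ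
        * (.ofReal (ρ ^ (finrank ℝ E * (1 / r - 1 / p))) * .ofReal (ρ ^ (-(finrank ℝ E / r)))
          * (C * eLpNorm (fourierExtension a) (.ofReal r) volume)) := by gcongr; exact hbound a ha
    _ = _ := by ring

lemma rpow_le_one_add_sq_rpow {ρ α k : ℝ} (hρ : 0 ≤ ρ) (hα : 0 ≤ α) (hαk : α ≤ k) :
    ρ ^ α ≤ (1 + ρ ^ 2) ^ (k / 2) :=
  calc ρ ^ α = (ρ ^ 2) ^ (α / 2) := by
        rw [← rpow_natCast_mul hρ, Nat.cast_ofNat, mul_div_cancel₀ _ two_ne_zero]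
    _ ≤ (1 + ρ ^ 2) ^ (α / 2) := by gcongr; exact le_add_of_nonneg_left zero_le_one
    _ ≤ (1 + ρ ^ 2) ^ (k / 2) := by gcongr; exact le_add_of_nonneg_right (sq_nonneg ρ)

lemma exists_eLpNorm_spectralDensity_le_one_add_norm_sq (hE : 1 < finrank ℝ E) {r p k : ℝ}
    (hr : 1 ≤ r) (hrp : r ≤ p) (hk : finrank ℝ E * (1 / r - 1 / p) ≤ k) :
    ∃ C ≠ ⊤, ∀ (f : 𝓢(E, ℂ)) (τ : ℝ),
      eLpNorm (spectralDensity f τ) (.ofReal p) volume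
        ≤ C * eLpNorm (spectralDensity (fun ξ => (1 + ‖ξ‖ ^ 2) ^ (k / 2) • f ξ) τ)
          (.ofReal r) volume := by
  obtain ⟨C, hC, hbound⟩ := exists_eLpNorm_spectralDensity_le E hr hrp
  refine ⟨C, hC, fun f τ => ?_⟩
  rcases le_or_gt τ 0 with hτ | hτ
  · have hzero : spectralDensity f τ = 0 := funext (spectralDensity_of_nonpos hE f hτ)
    rw [hzero, eLpNorm_zero]
    exact zero_le
  have hsmul : spectralDensity (fun ξ => (1 + ‖ξ‖ ^ 2) ^ (k / 2) • f ξ) τ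
      = (1 + (2 * π * τ) ^ 2) ^ (k / 2) • spectralDensity f τ := by
    ext x
    rw [spectralDensity_smul_norm fun ρ => (1 + ρ ^ 2) ^ (k / 2), max_eq_left hτ.le, Pi.smul_apply]
  rw [hsmul, eLpNorm_const_smul, ← mul_assoc, Real.enorm_of_nonneg (by positivity)]
  refine (hbound f τ hτ).trans ?_
  gcongr
  exact rpow_le_one_add_sq_rpow (by positivity) (mul_nonneg (Nat.cast_nonneg _)
    (sub_nonneg.2 (one_div_le_one_div_of_le (one_pos.trans_le hr) hrp))) hk

end Bernstein

section Minkowski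

variable {α β : Type*} [MeasurableSpace α] [MeasurableSpace β] {μ : Measure α} {ν : Measure β}

lemma lintegral_rpow_lintegral_le_mul [SFinite μ] [SFinite ν] {f : α → β → ℝ≥0∞}
    (hf : Measurable (Function.uncurry f)) {q q' : ℝ} (hq : q.HolderConjugate q') :
    ∫⁻ x, (∫⁻ t, f x t ∂ν) ^ q ∂μ
      ≤ (∫⁻ t, (∫⁻ x, f x t ^ q ∂μ) ^ (1 / q) ∂ν)
        * (∫⁻ x, (∫⁻ t, f x t ∂ν) ^ q ∂μ) ^ (1 / q') := by
  set G : α → ℝ≥0∞ := fun x => ∫⁻ t, f x t ∂ν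
  have hG : Measurable G := hf.lintegral_prod_right
  have hinner : Measurable fun t => ∫⁻ x, f x t ^ q ∂μ :=
    ((hf.comp measurable_swap).pow_const q).lintegral_prod_right
  calc ∫⁻ x, G x ^ q ∂μ = ∫⁻ x, ∫⁻ t, f x t * G x ^ (q - 1) ∂ν ∂μ := by
        refine lintegral_congr fun x => ?_
        rw [lintegral_mul_const _ hf.of_uncurry_left]
        nth_rw 1 [← add_sub_cancel 1 q]
        rw [ENNReal.rpow_add_of_nonneg _ _ zero_le_one hq.sub_one_pos.le, ENNReal.rpow_one]
    _ = ∫⁻ t, ∫⁻ x, f x t * G x ^ (q - 1) ∂μ ∂ν :=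
        lintegral_lintegral_swap (hf.mul ((hG.comp measurable_fst).pow_const _)).aemeasurable
    _ ≤ ∫⁻ t, (∫⁻ x, f x t ^ q ∂μ) ^ (1 / q) * (∫⁻ x, G x ^ q ∂μ) ^ (1 / q') ∂ν := by
        refine lintegral_mono fun t => (ENNReal.lintegral_mul_le_Lp_mul_Lq μ hq
          hf.of_uncurry_right.aemeasurable (hG.pow_const (q - 1)).aemeasurable).trans_eq ?_
        simp only [← ENNReal.rpow_mul, hq.sub_one_mul_conj]
    _ = _ := lintegral_mul_const _ (hinner.pow_const _)

lemma lintegral_rpow_lintegral_le_of_ne_top [SFinite μ] [SFinite ν] {f : α → β → ℝ≥0∞}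
    (hf : Measurable (Function.uncurry f)) {q : ℝ} (hq : 1 ≤ q)
    (hfin : ∫⁻ x, (∫⁻ t, f x t ∂ν) ^ q ∂μ ≠ ⊤) :
    (∫⁻ x, (∫⁻ t, f x t ∂ν) ^ q ∂μ) ^ (1 / q) ≤ ∫⁻ t, (∫⁻ x, f x t ^ q ∂μ) ^ (1 / q) ∂ν := by
  rcases hq.eq_or_lt with rfl | hq
  · simp only [ENNReal.rpow_one, one_div_one]
    exact (lintegral_lintegral_swap hf.aemeasurable).le
  have hconj := Real.HolderConjugate.conjExponent hq
  have hle := lintegral_rpow_lintegral_le_mul (μ := μ) (ν := ν) hf hconj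
  set I := ∫⁻ x, (∫⁻ t, f x t ∂ν) ^ q ∂μ
  rcases eq_or_ne I 0 with hI | hI
  · rw [hI, ENNReal.zero_rpow_of_pos (one_div_pos.2 hconj.pos)]
    exact zero_le
  have hsplit : I = I ^ (1 / q) * I ^ (1 / q.conjExponent) := by
    rw [← ENNReal.rpow_add _ _ hI hfin, one_div, one_div, hconj.inv_add_inv_eq_one,
      ENNReal.rpow_one]
  refine (ENNReal.mul_le_mul_iff_left (ENNReal.rpow_pos_of_nonneg ?_ ?_).ne' ?_).1
    (hsplit.symm.trans_le hle)
  · exact pos_iff_ne_zero.2 hI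
  · exact one_div_nonneg.2 hconj.symm.nonneg
  · exact ENNReal.rpow_ne_top_of_nonneg (one_div_nonneg.2 hconj.symm.nonneg) hfin

lemma lintegral_rpow_lintegral_ne_top {f : α → β → ℝ≥0∞} {q : ℝ} (hq : 0 < q) {A : Set α}
    {B : Set β} (hA : MeasurableSet A) (hB : MeasurableSet B) (hμA : μ A ≠ ⊤) (hνB : ν B ≠ ⊤)
    {c : ℝ≥0∞} (hc : c ≠ ⊤) (hf : ∀ x t, f x t ≤ (A ×ˢ B).indicator (fun _ => c) (x, t)) :
    ∫⁻ x, (∫⁻ t, f x t ∂ν) ^ q ∂μ ≠ ⊤ := by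
  have hle : ∀ x, (∫⁻ t, f x t ∂ν) ^ q ≤ A.indicator (fun _ => (c * ν B) ^ q) x := fun x => by
    by_cases hx : x ∈ A
    · rw [indicator_of_mem hx, ← lintegral_indicator_const hB]
      gcongr with t
      exact (hf x t).trans_eq (indicator_const_eq_indicator_const (by simp [hx]))
    · have hzero : ∀ t, f x t = 0 := fun t =>
        le_zero_iff.1 ((hf x t).trans_eq (indicator_of_notMem (fun h => hx h.1) _))
      simp only [hzero, lintegral_zero, ENNReal.zero_rpow_of_pos hq, zero_le]
  refine ((lintegral_mono hle).trans_lt ?_).ne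
  rw [lintegral_indicator_const hA]
  exact ENNReal.mul_lt_top
    (ENNReal.rpow_lt_top_of_nonneg hq.le (ENNReal.mul_ne_top hc hνB)) hμA.lt_top

lemma exists_tendsto_lintegral_rpow_lintegral [SigmaFinite μ] [SigmaFinite ν]
    {f : α → β → ℝ≥0∞} (hf : Measurable (Function.uncurry f)) {q : ℝ} (hq : 0 < q) :
    ∃ g : ℕ → α → β → ℝ≥0∞, (∀ N, Measurable (Function.uncurry (g N))) ∧
      (∀ N x t, g N x t ≤ f x t) ∧ (∀ N, ∫⁻ x, (∫⁻ t, g N x t ∂ν) ^ q ∂μ ≠ ⊤) ∧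
      Tendsto (fun N => ∫⁻ x, (∫⁻ t, g N x t ∂ν) ^ q ∂μ) atTop
        (𝓝 (∫⁻ x, (∫⁻ t, f x t ∂ν) ^ q ∂μ)) := by
  let S : ℕ → Set (α × β) := fun N => spanningSets μ N ×ˢ spanningSets ν N
  let g : ℕ → α → β → ℝ≥0∞ := fun N x t => (S N).indicator (fun z => min (f z.1 z.2) N) (x, t)
  have hg : ∀ N, Measurable (Function.uncurry (g N)) := fun N =>
    (hf.min measurable_const).indicator
      ((measurableSet_spanningSets μ N).prod (measurableSet_spanningSets ν N))
  have hmono : ∀ x t, Monotone fun N => g N x t := fun x t M N hMN =>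
    (indicator_le_indicator_of_subset (prod_mono (monotone_spanningSets μ hMN)
      (monotone_spanningSets ν hMN)) (fun _ => zero_le) _).trans
      (indicator_le_indicator (min_le_min_left _ (Nat.cast_le.2 hMN)))
  have htendsto : ∀ x t, Tendsto (fun N => g N x t) atTop (𝓝 (f x t)) := fun x t => by
    have hmem : ∀ᶠ N in atTop, (x, t) ∈ S N := by
      filter_upwards [eventually_mem_spanningSets μ x, eventually_mem_spanningSets ν t]
        with N hx ht using ⟨hx, ht⟩
    have hmin := (tendsto_const_nhds (x := f x t)).min ENNReal.tendsto_nat_nhds_top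
    rw [min_top_right] at hmin
    exact hmin.congr' (hmem.mono fun N hN => (indicator_of_mem hN _).symm)
  have hinner : ∀ x, Tendsto (fun N => (∫⁻ t, g N x t ∂ν) ^ q) atTop
      (𝓝 ((∫⁻ t, f x t ∂ν) ^ q)) := fun x =>
    (ENNReal.continuous_rpow_const.tendsto _).comp <| lintegral_tendsto_of_tendsto_of_monotone
      (fun N => (hg N).of_uncurry_left.aemeasurable) (ae_of_all _ (hmono x))
      (ae_of_all _ (htendsto x))
  refine ⟨g, hg, fun N x t => (hmono x t).ge_of_tendsto (htendsto x t) N, fun N => ?_,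
    lintegral_tendsto_of_tendsto_of_monotone
      (fun N => ((hg N).lintegral_prod_right.pow_const q).aemeasurable)
      (ae_of_all _ fun x M N hMN => ?_) (ae_of_all _ hinner)⟩
  · exact lintegral_rpow_lintegral_ne_top hq (measurableSet_spanningSets μ N)
      (measurableSet_spanningSets ν N) (measure_spanningSets_lt_top μ N).ne
      (measure_spanningSets_lt_top ν N).ne (ENNReal.natCast_ne_top N)
      fun x t => indicator_le_indicator (min_le_right _ _)
  · dsimp only
    gcongr with t
    exact hmono x t hMN

lemma lintegral_rpow_lintegral_le [SigmaFinite μ] [SigmaFinite ν] {f : α → β → ℝ≥0∞}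
    (hf : Measurable (Function.uncurry f)) {q : ℝ} (hq : 1 ≤ q) :
    (∫⁻ x, (∫⁻ t, f x t ∂ν) ^ q ∂μ) ^ (1 / q) ≤ ∫⁻ t, (∫⁻ x, f x t ^ q ∂μ) ^ (1 / q) ∂ν := by
  have hq0 : 0 < q := one_pos.trans_le hq
  obtain ⟨g, hg, hle, hfin, hlim⟩ :=
    exists_tendsto_lintegral_rpow_lintegral (μ := μ) (ν := ν) hf hq0
  refine le_of_tendsto' ((ENNReal.continuous_rpow_const.tendsto _).comp hlim) fun N => ?_
  refine (lintegral_rpow_lintegral_le_of_ne_top (hg N) hq (hfin N)).trans ?_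
  gcongr with t x
  exact hle N x t

lemma eLpNorm_eLpNorm_le_eLpNorm_eLpNorm [SigmaFinite μ] [SigmaFinite ν] {ε : Type*}
    [ENorm ε] {u : β → α → ε}
    (hu : Measurable fun z : α × β => ‖u z.2 z.1‖ₑ) {a b : ℝ} (ha : 0 < a) (hab : a ≤ b) :
    eLpNorm (fun x => eLpNorm (fun t => u t x) (.ofReal a) ν) (.ofReal b) μ
      ≤ eLpNorm (fun t => eLpNorm (u t) (.ofReal b) μ) (.ofReal a) ν := by
  have hb : 0 < b := ha.trans_le hab
  have hminkowski := lintegral_rpow_lintegral_le (μ := μ) (ν := ν)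
    (f := fun x t => ‖u t x‖ₑ ^ a) (hu.pow_const a) ((one_le_div ha).2 hab)
  have hroot := ENNReal.rpow_le_rpow hminkowski (one_div_nonneg.2 ha.le)
  simp only [eLpNorm_eq_lintegral_rpow_enorm_toReal (ENNReal.ofReal_pos.2 ha).ne'
    ENNReal.ofReal_ne_top, eLpNorm_eq_lintegral_rpow_enorm_toReal (ENNReal.ofReal_pos.2 hb).ne'
    ENNReal.ofReal_ne_top, ENNReal.toReal_ofReal ha.le, ENNReal.toReal_ofReal hb.le,
    enorm_eq_self, ← ENNReal.rpow_mul] at hroot ⊢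
  have hexp₁ : 1 / a * b = b / a := by ring
  have hexp₂ : 1 / (b / a) * (1 / a) = 1 / b := by field_simp
  have hexp₃ : 1 / b * a = 1 / (b / a) := by field_simp
  rw [mul_div_cancel₀ b ha.ne', hexp₂, ← hexp₃] at hroot
  rwa [hexp₁]

end Minkowski

section MixedNorms

lemma measurable_eLpNorm {X β G : Type*} [MeasurableSpace X] [MeasurableSpace β]
    [NormedAddCommGroup G] {μ : Measure X} [SFinite μ] {F : β → X → G}
    (hF : StronglyMeasurable (Function.uncurry F)) {r : ℝ} (hr : 0 < r) :
    Measurable fun τ => eLpNorm (F τ) (.ofReal r) μ := by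
  simp only [eLpNorm_eq_lintegral_rpow_enorm_toReal (ENNReal.ofReal_pos.2 hr).ne'
    ENNReal.ofReal_ne_top]
  exact ((hF.enorm.pow_const _).lintegral_prod_right).pow_const _

lemma ae_lt_top_of_eLpNorm_lt_top {X : Type*} [MeasurableSpace X] {μ : Measure X} {g : X → ℝ≥0∞}
    (hg : AEMeasurable g μ) {q : ℝ≥0∞} (hq : q ≠ 0) (hq_top : q ≠ ⊤) (hgq : eLpNorm g q μ < ⊤) :
    ∀ᵐ x ∂μ, g x < ⊤ := by
  have hint := lintegral_rpow_enorm_lt_top_of_eLpNorm_lt_top hq hq_top hgq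
  filter_upwards [ae_lt_top' (hg.enorm.pow_const _) hint.ne] with x hx
  rwa [ENNReal.rpow_lt_top_iff_of_pos (ENNReal.toReal_pos hq hq_top), enorm_eq_self] at hx

lemma L2LrNorm_eq_lpNorm {r : ℝ} (hr : 0 < r) {F : ℝ → EuclideanSpace ℝ (Fin n) → ℂ}
    (hF : StronglyMeasurable (Function.uncurry F)) :
    L2LrNorm r F = lpNorm (fun τ => (eLpNorm (F τ) (.ofReal r) volume).toReal) 2 volume := by
  rw [lpNorm_eq_integral_norm_rpow_toReal two_ne_zero ENNReal.ofNat_ne_top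
    (measurable_eLpNorm hF hr).ennreal_toReal.aestronglyMeasurable, L2LrNorm, ENNReal.toReal_ofNat,
    one_div]
  congr! 3
  rw [toReal_eLpNorm hF.of_uncurry_left.aestronglyMeasurable,
    lpNorm_eq_integral_norm_rpow_toReal (ENNReal.ofReal_pos.2 hr).ne' ENNReal.ofReal_ne_top
    hF.of_uncurry_left.aestronglyMeasurable, ENNReal.toReal_ofReal hr.le,
    norm_of_nonneg (by positivity), ← rpow_mul (by positivity), inv_mul_eq_div]

lemma ofReal_L2LrNorm {r : ℝ} (hr : 0 < r) {F : ℝ → EuclideanSpace ℝ (Fin n) → ℂ}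
    (hF : StronglyMeasurable (Function.uncurry F))
    (hfin : eLpNorm (fun τ => eLpNorm (F τ) (.ofReal r) volume) 2 volume < ⊤) :
    .ofReal (L2LrNorm r F) = eLpNorm (fun τ => eLpNorm (F τ) (.ofReal r) volume) 2 volume := by
  have hmeas := measurable_eLpNorm (μ := volume) hF hr
  have hae : eLpNorm (fun τ => (eLpNorm (F τ) (.ofReal r) volume).toReal) 2 volume
      = eLpNorm (fun τ => eLpNorm (F τ) (.ofReal r) volume) 2 volume := by
    refine eLpNorm_congr_enorm_ae ?_
    filter_upwards [ae_lt_top_of_eLpNorm_lt_top hmeas.aemeasurable two_ne_zero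
      ENNReal.ofNat_ne_top hfin] with τ hτ
    rw [Real.enorm_of_nonneg ENNReal.toReal_nonneg, ENNReal.ofReal_toReal hτ.ne, enorm_eq_self]
  rw [L2LrNorm_eq_lpNorm hr hF, ofReal_lpNorm
    ⟨hmeas.ennreal_toReal.aestronglyMeasurable, hae.trans_lt hfin⟩, hae]

lemma ofReal_LpL2Norm_le {p : ℝ} (hp : 0 < p) (u : ℝ → EuclideanSpace ℝ (Fin n) → ℂ) :
    .ofReal (LpL2Norm p u)
      ≤ eLpNorm (fun x => eLpNorm (fun t => u t x) 2 volume) (.ofReal p) volume := by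
  have hnonneg : ∀ x, 0 ≤ ∫ t, ‖u t x‖ ^ 2 := fun x => integral_nonneg fun t => sq_nonneg _
  have hinner : ∀ x, ‖(∫ t, ‖u t x‖ ^ 2) ^ (p / 2)‖ₑ
      ≤ eLpNorm (fun t => u t x) 2 volume ^ p := fun x => by
    rw [Real.enorm_rpow_of_nonneg (hnonneg x) (by positivity),
      eLpNorm_eq_lintegral_rpow_enorm_toReal two_ne_zero ENNReal.ofNat_ne_top, ← ENNReal.rpow_mul,
      ENNReal.toReal_ofNat, one_div_mul_eq_div]
    gcongr
    refine (enorm_integral_le_lintegral_enorm _).trans_eq (lintegral_congr fun t => ?_)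
    rw [enorm_pow, enorm_norm, ENNReal.rpow_ofNat]
  have houter : 0 ≤ ∫ x : EuclideanSpace ℝ (Fin n), (∫ t, ‖u t x‖ ^ 2) ^ (p / 2) :=
    integral_nonneg fun x => rpow_nonneg (hnonneg x) _
  rw [LpL2Norm, eLpNorm_eq_lintegral_rpow_enorm_toReal (ENNReal.ofReal_pos.2 hp).ne'
    ENNReal.ofReal_ne_top, ENNReal.toReal_ofReal hp.le,
    ← ENNReal.ofReal_rpow_of_nonneg houter (by positivity), ← Real.enorm_of_nonneg houter]
  gcongr
  exact (enorm_integral_le_lintegral_enorm _).trans (lintegral_mono hinner)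

end MixedNorms

section MixedEstimate

variable {E : Type*} [NormedAddCommGroup E] [InnerProductSpace ℝ E] [FiniteDimensional ℝ E]
  [MeasurableSpace E] [BorelSpace E]

lemma stronglyMeasurable_spectralDensity (f : 𝓢(E, ℂ)) :
    StronglyMeasurable (Function.uncurry (spectralDensity f)) :=
  (continuous_spectralDensity_schwartzMap f).stronglyMeasurable

lemma exists_eLpNorm_eLpNorm_spectralDensity_le (hE : 1 < finrank ℝ E) {r p k : ℝ} (hr : 2 ≤ r)
    (hrp : r ≤ p) (hk : finrank ℝ E * (1 / r - 1 / p) ≤ k) :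
    ∃ C ≠ ⊤, ∀ f : 𝓢(E, ℂ),
      eLpNorm (fun x => eLpNorm (fun τ => spectralDensity f τ x) 2 volume) (.ofReal p) volume
        ≤ C * eLpNorm (fun τ => eLpNorm
            (spectralDensity (fun ξ => (1 + ‖ξ‖ ^ 2) ^ (k / 2) • f ξ) τ) (.ofReal r) volume)
          2 volume := by
  obtain ⟨C, hC, hbernstein⟩ :=
    exists_eLpNorm_spectralDensity_le_one_add_norm_sq hE (by linarith) hrp hk
  refine ⟨C, hC, fun f => ?_⟩
  have hmeas : Measurable fun z : E × ℝ => ‖spectralDensity f z.2 z.1‖ₑ :=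
    ((stronglyMeasurable_spectralDensity f).measurable.comp measurable_swap).enorm
  have hminkowski := eLpNorm_eLpNorm_le_eLpNorm_eLpNorm (μ := volume) (ν := volume) hmeas two_pos
    (hr.trans hrp)
  rw [ENNReal.ofReal_ofNat] at hminkowski
  refine hminkowski.trans (eLpNorm_le_mul_eLpNorm_of_ae_le_mul'' _ ?_ (ae_of_all _ (hbernstein f)))
  rw [← coe_smulLeftCLM_one_add_norm_sq_rpow]
  exact (measurable_eLpNorm (stronglyMeasurable_spectralDensity _)
    (two_pos.trans_le hr)).aestronglyMeasurable

/-- The Bessel potential `(1 - Δ/4π²)^{k/2} u` of a Schwartz function, which turns the power of the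
frequency lost in Bernstein's inequality into `k` Sobolev derivatives. -/
def besselPotential (k : ℝ) (u : 𝓢(E, ℂ)) : 𝓢(E, ℂ) :=
  SchwartzMap.fourierMultiplierCLM ℂ (fun ξ => (1 + ‖ξ‖ ^ 2) ^ (k / 2)) u

lemma fourier_besselPotential (k : ℝ) (u : 𝓢(E, ℂ)) :
    𝓕 (⇑(besselPotential k u)) = fun ξ => (1 + ‖ξ‖ ^ 2) ^ (k / 2) • (𝓕 u) ξ := by
  rw [besselPotential, SchwartzMap.fourierMultiplierCLM_apply, ← SchwartzMap.fourier_coe,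
    fourier_fourierInv_eq, coe_smulLeftCLM_one_add_norm_sq_rpow]

lemma norm_sq_fourier_besselPotential (k : ℝ) (u : 𝓢(E, ℂ)) (ξ : E) :
    ‖𝓕 (⇑(besselPotential k u)) ξ‖ ^ 2 = (1 + ‖ξ‖ ^ 2) ^ k * ‖𝓕 (⇑u) ξ‖ ^ 2 := by
  rw [fourier_besselPotential, norm_smul, norm_of_nonneg (by positivity), mul_pow, ← rpow_natCast,
    ← rpow_mul (by positivity), SchwartzMap.fourier_coe, Nat.cast_ofNat,
    div_mul_cancel₀ k two_ne_zero]

end MixedEstimate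

lemma HdotNorm_besselPotential_le {k s : ℝ} (hs : 0 ≤ s) (u : 𝓢(EuclideanSpace ℝ (Fin n), ℂ)) :
    HdotNorm s (besselPotential k u) ≤ HsNorm (k + s) u := by
  have hint : Integrable fun ξ : EuclideanSpace ℝ (Fin n) =>
      (1 + ‖ξ‖ ^ 2) ^ (k + s) * ‖𝓕 (⇑u) ξ‖ ^ 2 := by
    simp only [← norm_sq_fourier_besselPotential]
    exact ((𝓕 (besselPotential (k + s) u)).memLp 2 volume).integrable_norm_pow two_ne_zero
  refine rpow_le_rpow (integral_nonneg fun ξ => by positivity) ?_ (by norm_num)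
  refine integral_mono_of_nonneg (ae_of_all _ fun ξ => by positivity) hint
    (ae_of_all _ fun ξ => ?_)
  have hweight : ‖ξ‖ ^ (2 * s) ≤ (1 + ‖ξ‖ ^ 2) ^ s := by
    rw [rpow_mul (norm_nonneg ξ), rpow_two]
    exact rpow_le_rpow (sq_nonneg _) (le_add_of_nonneg_left zero_le_one) hs
  calc ‖ξ‖ ^ (2 * s) * ‖𝓕 (⇑(besselPotential k u)) ξ‖ ^ 2
      ≤ (1 + ‖ξ‖ ^ 2) ^ s * ‖𝓕 (⇑(besselPotential k u)) ξ‖ ^ 2 := by gcongr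
    _ = (1 + ‖ξ‖ ^ 2) ^ (k + s) * ‖𝓕 (⇑u) ξ‖ ^ 2 := by
      rw [norm_sq_fourier_besselPotential, rpow_add (by positivity)]
      ring

lemma halfWave_eq_waveEvolution (u : 𝓢(EuclideanSpace ℝ (Fin n), ℂ)) :
    halfWave u = waveEvolution (𝓕 (⇑u)) :=
  rfl

lemma LpL2Norm_halfWave_eq (hn : 2 ≤ n) (p : ℝ) (u : 𝓢(EuclideanSpace ℝ (Fin n), ℂ)) :
    LpL2Norm p (halfWave u) = LpL2Norm p (spectralDensity (𝓕 (⇑u))) := by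
  have hE : 1 < finrank ℝ (EuclideanSpace ℝ (Fin n)) := by rwa [finrank_euclideanSpace_fin]
  simp only [LpL2Norm, halfWave_eq_waveEvolution, ← SchwartzMap.fourier_coe,
    integral_norm_sq_waveEvolution hE]

lemma L2LrNorm_fourier_halfWave_eq (hn : 2 ≤ n) (r : ℝ) (u : 𝓢(EuclideanSpace ℝ (Fin n), ℂ)) :
    L2LrNorm r (fun τ x => 𝓕 (fun t => halfWave u t x) τ)
      = L2LrNorm r (spectralDensity (𝓕 (⇑u))) := by
  have hE : 1 < finrank ℝ (EuclideanSpace ℝ (Fin n)) := by rwa [finrank_euclideanSpace_fin]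
  simp only [L2LrNorm, halfWave_eq_waveEvolution, ← SchwartzMap.fourier_coe,
    fourier_waveEvolution hE]

lemma L2LrNorm_nonneg (r : ℝ) (F : ℝ → EuclideanSpace ℝ (Fin n) → ℂ) : 0 ≤ L2LrNorm r F := by
  unfold L2LrNorm
  positivity

lemma exists_LpL2Norm_halfWave_le (hn : 2 ≤ n) {r p k : ℝ} (hr : n < ((n : ℝ) - 1) / 2 * r)
    (hrp : r ≤ p) (hk : n * (1 / r - 1 / p) ≤ k) :
    ∃ C > (0 : ℝ), ∀ u : 𝓢(EuclideanSpace ℝ (Fin n), ℂ),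
      LpL2Norm p (halfWave u)
        ≤ C * L2LrNorm r (fun τ x => 𝓕 (fun t => halfWave (besselPotential k u) t x) τ) := by
  have hE : 1 < finrank ℝ (EuclideanSpace ℝ (Fin n)) := by rwa [finrank_euclideanSpace_fin]
  have hn' : (2 : ℝ) ≤ n := mod_cast hn
  have hr2 : 2 < r := by nlinarith
  have hr0 : 0 < r := by linarith
  rw [← finrank_euclideanSpace_fin (𝕜 := ℝ) (n := n)] at hr hk
  obtain ⟨C, hC, hle⟩ := exists_eLpNorm_eLpNorm_spectralDensity_le hE hr2.le hrp hk
  refine ⟨C.toReal + 1, by positivity, fun u => ?_⟩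
  set v := besselPotential k u
  set N := L2LrNorm r (spectralDensity (𝓕 (⇑v))) with hN
  have hN₀ : 0 ≤ N := L2LrNorm_nonneg _ _
  have hbound : .ofReal (LpL2Norm p (spectralDensity (𝓕 (⇑u)))) ≤ C * .ofReal N := by
    refine ((ofReal_LpL2Norm_le (hr0.trans_le hrp) _).trans (hle (𝓕 u))).trans_eq ?_
    rw [← fourier_besselPotential, hN, ← SchwartzMap.fourier_coe v,
      ofReal_L2LrNorm hr0 (stronglyMeasurable_spectralDensity _)
        (eLpNorm_eLpNorm_spectralDensity_lt_top hE _ hr0 hr)]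
  calc LpL2Norm p (halfWave u)
      = LpL2Norm p (spectralDensity (𝓕 (⇑u))) := LpL2Norm_halfWave_eq hn p u
    _ ≤ (C * .ofReal N).toReal := (ENNReal.ofReal_le_iff_le_toReal (by finiteness)).1 hbound
    _ = C.toReal * N := by rw [ENNReal.toReal_mul, ENNReal.toReal_ofReal hN₀]
    _ ≤ (C.toReal + 1) * N := by gcongr; linarith
    _ = _ := by rw [hN, L2LrNorm_fourier_halfWave_eq hn]

theorem LpL2_estimate_of_square_function_bound_general (hn : 2 ≤ n) {r p k s : ℝ}
    (hr : n < ((n : ℝ) - 1) / 2 * r) (hrp : r ≤ p) (hk : n * (1 / r - 1 / p) ≤ k) (hs : 0 ≤ s)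
    (hsquare : ∃ C > (0 : ℝ), ∀ u : 𝓢(EuclideanSpace ℝ (Fin n), ℂ),
      L2LrNorm r (fun τ x => 𝓕 (fun t => halfWave u t x) τ) ≤ C * HdotNorm s u) :
    ∃ C > (0 : ℝ), ∀ u : 𝓢(EuclideanSpace ℝ (Fin n), ℂ),
      LpL2Norm p (halfWave u) ≤ C * HsNorm (k + s) u := by
  obtain ⟨C, hC, hsquare⟩ := hsquare
  obtain ⟨D, hD, hLpL2⟩ := exists_LpL2Norm_halfWave_le hn hr hrp hk
  refine ⟨D * C, by positivity, fun u => ?_⟩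
  calc LpL2Norm p (halfWave u)
      ≤ D * L2LrNorm r (fun τ x => 𝓕 (fun t => halfWave (besselPotential k u) t x) τ) := hLpL2 u
    _ ≤ D * (C * HdotNorm s (besselPotential k u)) := by gcongr; exact hsquare _
    _ ≤ D * (C * HsNorm (k + s) u) := by gcongr; exact HdotNorm_besselPotential_le hs u
    _ = D * C * HsNorm (k + s) u := (mul_assoc _ _ _).symm

end

theorem LpL2_estimate_of_square_function_bound
    (hn : 2 ≤ n) (k p : ℝ) (hk : 0 ≤ k) (hp' : 0 < p)
    (hp₁ : 1 / p ≤ ((n : ℝ) - 1) / (2 * ((n : ℝ) + 1)))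
    (hp₂ : ((n : ℝ) - 1) / (2 * ((n : ℝ) + 1)) - k / n ≤ 1 / p)
    (hKMBT : ∃ C > (0 : ℝ), ∀ u₀ : SchwartzMap (EuclideanSpace ℝ (Fin n)) ℂ,
      L2LrNorm (2 * ((n : ℝ) + 1) / ((n : ℝ) - 1))
          (fun τ x => 𝓕 (fun t => halfWave u₀ t x) τ)
        ≤ C * HdotNorm (((n : ℝ) - 1) / (2 * ((n : ℝ) + 1))) (⇑u₀)) :
    ∃ C > (0 : ℝ), ∀ u₀ : SchwartzMap (EuclideanSpace ℝ (Fin n)) ℂ,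
      LpL2Norm p (halfWave u₀)
        ≤ C * HsNorm (k + ((n : ℝ) - 1) / (2 * ((n : ℝ) + 1))) (⇑u₀) := by
  have hn' : (2 : ℝ) ≤ n := mod_cast hn
  have hn₁ : (0 : ℝ) < n - 1 := by linarith
  have hn₀ : (0 : ℝ) < n := by linarith
  have hdecay : ((n : ℝ) - 1) / 2 * (2 * ((n : ℝ) + 1) / ((n : ℝ) - 1)) = n + 1 := by field_simp
  have hrp : 2 * ((n : ℝ) + 1) / ((n : ℝ) - 1) ≤ p :=
    le_of_one_div_le_one_div hp' (by rwa [one_div_div])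
  refine LpL2_estimate_of_square_function_bound_general hn (by rw [hdecay]; linarith) hrp ?_
    (by positivity) hKMBT
  rw [one_div_div, ← le_div_iff₀' hn₀]
  linarith
end

section
/- Let n ≥ 3 and s > n/2 - 1. For Schwartz functions f, g on ℝ^n define ‖f‖_X := ‖∇f‖_{H^s}. Then there is a constant c₁ such that ‖fg‖_{H^{s}} ≤ c₁ ‖f‖_X ‖g‖_{H^{s}}. -/
open FourierTransform MeasureTheory

variable {n : ℕ}

/-- The norm `‖f‖_X = ‖∇f‖_{H^s} = ‖ |ξ| ⟨ξ⟩^s 𝓕f ‖_{L²}`. -/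
noncomputable def XNorm (s : ℝ) (f : EuclideanSpace ℝ (Fin n) → ℂ) : ℝ :=
  (∫ ξ : EuclideanSpace ℝ (Fin n),
    ‖ξ‖ ^ 2 * (1 + ‖ξ‖ ^ 2) ^ s * ‖𝓕 f ξ‖ ^ 2) ^ (1 / 2 : ℝ)

/-! On the Fourier side the product is `𝓕 f ∗ 𝓕 g`, and the weight `⟨ξ⟩^s` can be distributed over
the two factors: according to which of `η` and `ξ - η` is larger,
`⟨ξ⟩^s ≤ 2^s (|η| ⟨η⟩^s |ξ - η|⁻¹ + ⟨ξ - η⟩^s)`. Young's inequality `L¹ ∗ L² → L²` then bounds each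
of the two terms, and Cauchy–Schwarz against `(|ξ| ⟨ξ⟩^s)⁻¹` bounds the `L¹` factors
`|ξ|⁻¹ 𝓕 g` and `𝓕 f`. This kernel is in `L²`: near the origin because `n ≥ 3`, at infinity because
`s > n / 2 - 1`. -/

open scoped ENNReal SchwartzMap

section LConvolution

variable {G : Type*} [MeasurableSpace G] [AddGroup G] [MeasurableAdd₂ G] [MeasurableNeg G]
  {μ : Measure G} [SFinite μ] [μ.IsAddLeftInvariant] {f g : G → ℝ≥0∞}

theorem lintegral_lconvolution (hf : AEMeasurable f μ) (hg : AEMeasurable g μ) :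
    ∫⁻ x, (f ⋆ₗ[μ] g) x ∂μ = (∫⁻ x, f x ∂μ) * ∫⁻ x, g x ∂μ := by
  have hg_add (y : G) : AEMeasurable (fun x ↦ g (-y + x)) μ :=
    hg.comp_quasiMeasurePreserving (measurePreserving_add_left μ (-y)).quasiMeasurePreserving
  simp only [lconvolution_def]
  rw [lintegral_lintegral_swap (by fun_prop)]
  calc ∫⁻ y, ∫⁻ x, f y * g (-y + x) ∂μ ∂μ
      = ∫⁻ y, f y * ∫⁻ x, g x ∂μ ∂μ := lintegral_congr fun y ↦ by
        rw [lintegral_const_mul'' _ (hg_add y), lintegral_add_left_eq_self g (-y)]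
    _ = (∫⁻ x, f x ∂μ) * ∫⁻ x, g x ∂μ := lintegral_mul_const'' _ hf

-- Jensen's inequality for `t ↦ t ^ p` and the measure with density `f`, rescaled to total mass one.
theorem lconvolution_rpow_le {p : ℝ} (hp : 1 ≤ p) (hf : AEMeasurable f μ) (hg : AEMeasurable g μ)
    (x : G) : (f ⋆ₗ[μ] g) x ^ p ≤ (∫⁻ y, f y ∂μ) ^ (p - 1) * (f ⋆ₗ[μ] (g · ^ p)) x := by
  have hp₀ : 0 < p := by positivity
  have hgx : AEMeasurable (fun y ↦ g (-y + x)) μ := by fun_prop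
  have holder := eLpNorm'_le_eLpNorm'_mul_rpow_measure_univ one_pos hp
    (hgx.mono_ac (withDensity_absolutelyContinuous μ f)).aestronglyMeasurable
  simp only [eLpNorm', enorm_eq_self, ENNReal.rpow_one, div_one, withDensity_apply _ .univ,
    Measure.restrict_univ, lintegral_withDensity_eq_lintegral_mul₀ hf hgx,
    lintegral_withDensity_eq_lintegral_mul₀ hf (hgx.pow_const p), Pi.mul_apply] at holder
  calc (f ⋆ₗ[μ] g) x ^ p
      ≤ ((∫⁻ y, f y * g (-y + x) ^ p ∂μ) ^ (1 / p) * (∫⁻ y, f y ∂μ) ^ (1 - 1 / p)) ^ p := by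
        gcongr; exact holder
    _ = (∫⁻ y, f y ∂μ) ^ (p - 1) * (f ⋆ₗ[μ] (g · ^ p)) x := by
        rw [ENNReal.mul_rpow_of_nonneg _ _ hp₀.le, ← ENNReal.rpow_mul, ← ENNReal.rpow_mul,
          one_div_mul_cancel hp₀.ne', ENNReal.rpow_one, sub_mul, one_mul,
          one_div_mul_cancel hp₀.ne', mul_comm, lconvolution_def]

theorem lconvolution_le_lintegral_mul_eLpNorm_top (hf : AEMeasurable f μ) (x : G) :
    (f ⋆ₗ[μ] g) x ≤ (∫⁻ y, f y ∂μ) * eLpNorm g ∞ μ := by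
  have hg : ∀ᵐ y ∂μ, g (-y + x) ≤ eLpNorm g ∞ μ := by
    have h := (quasiMeasurePreserving_add_right μ x).comp (quasiMeasurePreserving_neg μ)
    simpa using h.ae (enorm_ae_le_eLpNormEssSup g μ)
  calc (f ⋆ₗ[μ] g) x = ∫⁻ y, f y * g (-y + x) ∂μ := lconvolution_def
    _ ≤ ∫⁻ y, f y * eLpNorm g ∞ μ ∂μ :=
      lintegral_mono_ae (hg.mono fun y hy ↦ mul_le_mul_right hy _)
    _ = (∫⁻ y, f y ∂μ) * eLpNorm g ∞ μ := lintegral_mul_const'' _ hf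

theorem eLpNorm_lconvolution_le {p : ℝ≥0∞} (hp : 1 ≤ p) (hf : AEMeasurable f μ)
    (hg : AEMeasurable g μ) :
    eLpNorm (f ⋆ₗ[μ] g) p μ ≤ (∫⁻ x, f x ∂μ) * eLpNorm g p μ := by
  obtain rfl | hp_top := eq_or_ne p ∞
  · exact eLpNormEssSup_le_of_ae_enorm_bound <| .of_forall <|
      lconvolution_le_lintegral_mul_eLpNorm_top hf
  have hp₁ : 1 ≤ p.toReal := by simpa using ENNReal.toReal_mono hp_top hp
  simp only [eLpNorm_eq_lintegral_rpow_enorm_toReal (zero_lt_one.trans_le hp).ne' hp_top,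
    enorm_eq_self]
  have hp₀ : 0 < p.toReal := by positivity
  set q := p.toReal
  rw [one_div, ENNReal.rpow_inv_le_iff hp₀, ENNReal.mul_rpow_of_nonneg _ _ hp₀.le,
    ENNReal.rpow_inv_rpow hp₀.ne']
  calc ∫⁻ x, (f ⋆ₗ[μ] g) x ^ q ∂μ
      ≤ ∫⁻ x, (∫⁻ y, f y ∂μ) ^ (q - 1) * (f ⋆ₗ[μ] (g · ^ q)) x ∂μ :=
        lintegral_mono (lconvolution_rpow_le hp₁ hf hg)
    _ = (∫⁻ x, f x ∂μ) ^ (q - 1) * ((∫⁻ x, f x ∂μ) ^ (1 : ℝ) * ∫⁻ x, g x ^ q ∂μ) := by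
        rw [lintegral_const_mul'' _ (aemeasurable_lconvolution hf (hg.pow_const q)),
          lintegral_lconvolution hf (hg.pow_const q), ENNReal.rpow_one]
    _ = (∫⁻ x, f x ∂μ) ^ q * ∫⁻ x, g x ^ q ∂μ := by
        rw [← mul_assoc, ← ENNReal.rpow_add_of_nonneg _ _ (by linarith) zero_le_one, sub_add_cancel]

end LConvolution

theorem lintegral_mul_le_eLpNorm_two_mul_eLpNorm_two {α : Type*} [MeasurableSpace α]
    {μ : Measure α} {f g : α → ℝ≥0∞} (hf : AEMeasurable f μ) (hg : AEMeasurable g μ) :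
    ∫⁻ x, f x * g x ∂μ ≤ eLpNorm f 2 μ * eLpNorm g 2 μ := by
  simpa [eLpNorm_eq_lintegral_rpow_enorm_toReal] using
    ENNReal.lintegral_mul_le_Lp_mul_Lq μ .two_two hf hg

theorem toReal_eLpNorm_two {α : Type*} [MeasurableSpace α] {μ : Measure α} {w : α → ℝ≥0∞}
    (hw : AEMeasurable w μ) (hw_top : ∀ᵐ x ∂μ, w x < ∞) :
    (eLpNorm w 2 μ).toReal = (∫ x, (w x).toReal ^ 2 ∂μ) ^ (1 / 2 : ℝ) := by
  simp [eLpNorm_eq_lintegral_rpow_enorm_toReal, ENNReal.toReal_rpow, ← ENNReal.toReal_pow,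
    integral_toReal (hw.pow_const 2) (hw_top.mono fun _ h ↦ ENNReal.pow_lt_top h)]

section JapaneseBracket

variable {E : Type*} [NormedAddCommGroup E]

/-- The Japanese bracket `⟨x⟩ = (1 + ‖x‖ ^ 2) ^ (1 / 2)`. It takes values in `ℝ≥0∞` so that its
powers serve as weights under `∫⁻` and `eLpNorm` without coercions. -/
noncomputable def japaneseBracket (x : E) : ℝ≥0∞ := (1 + ‖x‖ₑ ^ 2) ^ (1 / 2 : ℝ)

theorem japaneseBracket_rpow (x : E) (s : ℝ) :
    japaneseBracket x ^ s = ENNReal.ofReal ((1 + ‖x‖ ^ 2) ^ (s / 2)) := by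
  have base : 1 + ‖x‖ₑ ^ 2 = ENNReal.ofReal (1 + ‖x‖ ^ 2) := by
    rw [ENNReal.ofReal_add zero_le_one (by positivity), ENNReal.ofReal_pow (norm_nonneg x),
      ofReal_norm, ENNReal.ofReal_one]
  rw [japaneseBracket, ← ENNReal.rpow_mul, base, ENNReal.ofReal_rpow_of_pos (by positivity),
    one_div_mul_eq_div]

theorem toReal_japaneseBracket_rpow_sq (s : ℝ) (x : E) :
    (japaneseBracket x ^ s).toReal ^ 2 = (1 + ‖x‖ ^ 2) ^ s := by
  rw [japaneseBracket_rpow, ENNReal.toReal_ofReal (by positivity),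
    ← Real.rpow_mul_natCast (by positivity), Nat.cast_ofNat, div_mul_cancel₀ _ two_ne_zero]

theorem japaneseBracket_rpow_ne_top (x : E) (s : ℝ) : japaneseBracket x ^ s ≠ ∞ :=
  japaneseBracket_rpow x s ▸ ENNReal.ofReal_ne_top

theorem japaneseBracket_rpow_ne_zero (x : E) (s : ℝ) : japaneseBracket x ^ s ≠ 0 := by
  rw [japaneseBracket_rpow, ENNReal.ofReal_ne_zero_iff]
  positivity

theorem enorm_le_japaneseBracket (x : E) : ‖x‖ₑ ≤ japaneseBracket x := by
  rw [japaneseBracket, one_div, ENNReal.le_rpow_inv_iff two_pos, ENNReal.rpow_two]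
  exact le_add_self

theorem measurable_japaneseBracket [MeasurableSpace E] [OpensMeasurableSpace E] :
    Measurable (japaneseBracket : E → ℝ≥0∞) := by
  unfold japaneseBracket
  fun_prop

theorem japaneseBracket_add_le {a b : E} (h : ‖a‖ₑ ≤ ‖b‖ₑ) :
    japaneseBracket (a + b) ≤ 2 * japaneseBracket b := by
  have enorm_add_le_two_mul : ‖a + b‖ₑ ≤ 2 * ‖b‖ₑ :=
    (enorm_add_le a b).trans (by rw [two_mul]; gcongr)
  rw [japaneseBracket, one_div, ENNReal.rpow_inv_le_iff two_pos,
    ENNReal.mul_rpow_of_nonneg _ _ zero_le_two, japaneseBracket, one_div,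
    ENNReal.rpow_inv_rpow two_ne_zero, ENNReal.rpow_two]
  calc 1 + ‖a + b‖ₑ ^ 2 ≤ 2 ^ 2 + (2 * ‖b‖ₑ) ^ 2 := by gcongr; norm_num
    _ = 2 ^ 2 * (1 + ‖b‖ₑ ^ 2) := by ring

theorem japaneseBracket_add_rpow_le {s : ℝ} (hs : 0 ≤ s) (a b : E) :
    japaneseBracket (a + b) ^ s ≤
      2 ^ s * (‖a‖ₑ * japaneseBracket a ^ s * ‖b‖ₑ⁻¹ + japaneseBracket b ^ s) := by
  rcases le_or_gt ‖a‖ₑ ‖b‖ₑ with hab | hba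
  · calc japaneseBracket (a + b) ^ s ≤ (2 * japaneseBracket b) ^ s := by
          gcongr; exact japaneseBracket_add_le hab
      _ = 2 ^ s * japaneseBracket b ^ s := ENNReal.mul_rpow_of_nonneg _ _ hs
      _ ≤ _ := by gcongr; exact le_add_self
  · have one_le_ratio : 1 ≤ ‖a‖ₑ * ‖b‖ₑ⁻¹ :=
      (ENNReal.mul_inv_cancel hba.ne_bot enorm_ne_top).symm.trans_le (by gcongr)
    calc japaneseBracket (a + b) ^ s ≤ (2 * japaneseBracket a) ^ s := by
          rw [add_comm]; gcongr; exact japaneseBracket_add_le hba.le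
      _ = 2 ^ s * (1 * japaneseBracket a ^ s) := by
          rw [one_mul, ENNReal.mul_rpow_of_nonneg _ _ hs]
      _ ≤ 2 ^ s * (‖a‖ₑ * ‖b‖ₑ⁻¹ * japaneseBracket a ^ s) := by gcongr
      _ = 2 ^ s * (‖a‖ₑ * japaneseBracket a ^ s * ‖b‖ₑ⁻¹) := by rw [mul_right_comm ‖a‖ₑ]
      _ ≤ _ := by gcongr; exact le_self_add

end JapaneseBracket

section WeightedConvolution

variable {E : Type*} [NormedAddCommGroup E] [MeasurableSpace E] [BorelSpace E] {μ : Measure E}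
  {s : ℝ} {u v : E → ℝ≥0∞}

theorem lintegral_enorm_inv_mul_le (hv : Measurable v) :
    ∫⁻ x, ‖x‖ₑ⁻¹ * v x ∂μ ≤ eLpNorm (fun x ↦ (‖x‖ₑ * japaneseBracket x ^ s)⁻¹) 2 μ *
      eLpNorm (fun x ↦ japaneseBracket x ^ s * v x) 2 μ := by
  have := measurable_japaneseBracket (E := E)
  calc ∫⁻ x, ‖x‖ₑ⁻¹ * v x ∂μ
      = ∫⁻ x, (‖x‖ₑ * japaneseBracket x ^ s)⁻¹ * (japaneseBracket x ^ s * v x) ∂μ := by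
        refine lintegral_congr fun x ↦ ?_
        rw [ENNReal.mul_inv (.inr (japaneseBracket_rpow_ne_top x s)) (.inl enorm_ne_top), mul_assoc,
          ENNReal.inv_mul_cancel_left (japaneseBracket_rpow_ne_zero x s)
            (japaneseBracket_rpow_ne_top x s)]
    _ ≤ _ := lintegral_mul_le_eLpNorm_two_mul_eLpNorm_two (by fun_prop) (by fun_prop)

theorem lintegral_le_eLpNorm_inv_weight_mul [NullSingletonClass μ] (hu : Measurable u) :
    ∫⁻ x, u x ∂μ ≤ eLpNorm (fun x ↦ (‖x‖ₑ * japaneseBracket x ^ s)⁻¹) 2 μ *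
      eLpNorm (fun x ↦ ‖x‖ₑ * japaneseBracket x ^ s * u x) 2 μ := by
  have := measurable_japaneseBracket (E := E)
  calc ∫⁻ x, u x ∂μ
      = ∫⁻ x, (‖x‖ₑ * japaneseBracket x ^ s)⁻¹ * (‖x‖ₑ * japaneseBracket x ^ s * u x) ∂μ := by
        refine lintegral_congr_ae ?_
        filter_upwards [μ.ae_ne 0] with x hx
        rw [ENNReal.inv_mul_cancel_left
          (mul_ne_zero (enorm_ne_zero.2 hx) (japaneseBracket_rpow_ne_zero x s))
          (ENNReal.mul_ne_top enorm_ne_top (japaneseBracket_rpow_ne_top x s))]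
    _ ≤ _ := lintegral_mul_le_eLpNorm_two_mul_eLpNorm_two (by fun_prop) (by fun_prop)

variable [SecondCountableTopology E]

theorem japaneseBracket_rpow_mul_lconvolution_le (hs : 0 ≤ s) (hu : Measurable u)
    (hv : Measurable v) (x : E) :
    japaneseBracket x ^ s * (u ⋆ₗ[μ] v) x ≤
      2 ^ s * (((fun y ↦ ‖y‖ₑ * japaneseBracket y ^ s * u y) ⋆ₗ[μ] (fun y ↦ ‖y‖ₑ⁻¹ * v y)) x +
        (u ⋆ₗ[μ] (fun y ↦ japaneseBracket y ^ s * v y)) x) := by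
  have := measurable_japaneseBracket (E := E)
  simp only [lconvolution_def]
  rw [← lintegral_const_mul' _ _ (japaneseBracket_rpow_ne_top x s),
    ← lintegral_add_left (by fun_prop), ← lintegral_const_mul _ (by fun_prop)]
  refine lintegral_mono fun y ↦ ?_
  have split := japaneseBracket_add_rpow_le hs y (-y + x)
  rw [add_neg_cancel_left] at split
  calc japaneseBracket x ^ s * (u y * v (-y + x))
      ≤ 2 ^ s * (‖y‖ₑ * japaneseBracket y ^ s * ‖-y + x‖ₑ⁻¹ + japaneseBracket (-y + x) ^ s) *
          (u y * v (-y + x)) := by gcongr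
    _ = 2 ^ s * (‖y‖ₑ * japaneseBracket y ^ s * u y * (‖-y + x‖ₑ⁻¹ * v (-y + x)) +
          u y * (japaneseBracket (-y + x) ^ s * v (-y + x))) := by ring

theorem eLpNorm_japaneseBracket_rpow_mul_lconvolution_le [SFinite μ] [μ.IsAddLeftInvariant]
    [μ.IsNegInvariant] [NullSingletonClass μ] (hs : 0 ≤ s) (hu : Measurable u) (hv : Measurable v) :
    eLpNorm (fun x ↦ japaneseBracket x ^ s * (u ⋆ₗ[μ] v) x) 2 μ ≤
      2 ^ (s + 1) * eLpNorm (fun x ↦ (‖x‖ₑ * japaneseBracket x ^ s)⁻¹) 2 μ *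
        eLpNorm (fun x ↦ ‖x‖ₑ * japaneseBracket x ^ s * u x) 2 μ *
        eLpNorm (fun x ↦ japaneseBracket x ^ s * v x) 2 μ := by
  have := measurable_japaneseBracket (E := E)
  set κ := eLpNorm (fun x : E ↦ (‖x‖ₑ * japaneseBracket x ^ s)⁻¹) 2 μ
  set U : E → ℝ≥0∞ := fun x ↦ ‖x‖ₑ * japaneseBracket x ^ s * u x
  set V : E → ℝ≥0∞ := fun x ↦ japaneseBracket x ^ s * v x
  set v' : E → ℝ≥0∞ := fun x ↦ ‖x‖ₑ⁻¹ * v x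
  have hU : Measurable U := by fun_prop
  have hV : Measurable V := by fun_prop
  have hv' : Measurable v' := by fun_prop
  have low_high : eLpNorm (U ⋆ₗ[μ] v') 2 μ ≤ κ * eLpNorm V 2 μ * eLpNorm U 2 μ := by
    rw [lconvolution_comm]
    refine (eLpNorm_lconvolution_le one_le_two hv'.aemeasurable hU.aemeasurable).trans ?_
    gcongr
    exact lintegral_enorm_inv_mul_le hv
  have high_low : eLpNorm (u ⋆ₗ[μ] V) 2 μ ≤ κ * eLpNorm U 2 μ * eLpNorm V 2 μ := by
    refine (eLpNorm_lconvolution_le one_le_two hu.aemeasurable hV.aemeasurable).trans ?_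
    gcongr
    exact lintegral_le_eLpNorm_inv_weight_mul hu
  calc eLpNorm (fun x ↦ japaneseBracket x ^ s * (u ⋆ₗ[μ] v) x) 2 μ
      ≤ (2 ^ s : NNReal) • eLpNorm (U ⋆ₗ[μ] v' + u ⋆ₗ[μ] V) 2 μ :=
        eLpNorm_le_nnreal_smul_eLpNorm_of_ae_le_mul' (.of_forall fun x ↦ by
          simpa [ENNReal.coe_rpow_of_nonneg _ hs] using
            japaneseBracket_rpow_mul_lconvolution_le hs hu hv x) 2
    _ = 2 ^ s * eLpNorm (U ⋆ₗ[μ] v' + u ⋆ₗ[μ] V) 2 μ := by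
        rw [ENNReal.smul_def, ENNReal.coe_rpow_of_nonneg _ hs, smul_eq_mul, ENNReal.coe_ofNat]
    _ ≤ 2 ^ s * (eLpNorm (U ⋆ₗ[μ] v') 2 μ + eLpNorm (u ⋆ₗ[μ] V) 2 μ) := by
        gcongr
        exact eLpNorm_add_le (measurable_lconvolution μ hU hv').aestronglyMeasurable
          (measurable_lconvolution μ hu hV).aestronglyMeasurable one_le_two
    _ ≤ 2 ^ s * (κ * eLpNorm V 2 μ * eLpNorm U 2 μ + κ * eLpNorm U 2 μ * eLpNorm V 2 μ) := by
        gcongr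
    _ = 2 ^ (s + 1) * κ * eLpNorm U 2 μ * eLpNorm V 2 μ := by
        rw [ENNReal.rpow_add_of_nonneg _ _ hs zero_le_one, ENNReal.rpow_one]
        ring

end WeightedConvolution

theorem rpow_neg_le_one_add_sq_rpow_neg {a r : ℝ} (ha : 0 ≤ a) (hr : 1 ≤ r) :
    r ^ (-a) ≤ 2 ^ (a / 2) * (1 + r ^ 2) ^ (-a / 2) := by
  calc r ^ (-a) = (r ^ 2) ^ (-a / 2) := by
        rw [← Real.rpow_natCast_mul (by positivity)]; congr 1; push_cast; ring
    _ ≤ ((1 + r ^ 2) / 2) ^ (-a / 2) :=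
        Real.rpow_le_rpow_of_nonpos (by positivity) (by nlinarith) (by linarith)
    _ = 2 ^ (a / 2) * (1 + r ^ 2) ^ (-a / 2) := by
        rw [Real.div_rpow (by positivity) zero_le_two, neg_div, Real.rpow_neg zero_le_two,
          div_inv_eq_mul, mul_comm]

section KernelIntegrability

variable {E : Type*} [NormedAddCommGroup E] [NormedSpace ℝ E] [FiniteDimensional ℝ E]
  [MeasurableSpace E] [BorelSpace E] {μ : Measure E} [μ.IsAddHaarMeasure]

theorem integrable_norm_rpow_neg_mul_one_add_norm_sq_rpow_neg {a b : ℝ} (ha : 0 ≤ a)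
    (ha_lt : a < Module.finrank ℝ E) (hab : Module.finrank ℝ E < a + b) :
    Integrable (fun x : E ↦ ‖x‖ ^ (-a) * (1 + ‖x‖ ^ 2) ^ (-b / 2)) μ := by
  have meas : AEStronglyMeasurable (fun x : E ↦ ‖x‖ ^ (-a) * (1 + ‖x‖ ^ 2) ^ (-b / 2)) μ :=
    Measurable.aestronglyMeasurable (by fun_prop)
  have near_zero : IntegrableOn (fun x : E ↦ ‖x‖ ^ (-a) * (1 + ‖x‖ ^ 2) ^ (-b / 2))
      (Metric.ball 0 1) μ := by
    refine integrableOn_ball_of_norm_le_rpow (C := 1) (by exact_mod_cast ha.trans_lt ha_lt) ha_lt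
      (.of_forall fun x ↦ ?_) meas
    rw [Real.norm_of_nonneg (by positivity), mul_comm]
    gcongr
    exact Real.rpow_le_one_of_one_le_of_nonpos (by simp) (by linarith)
  have near_infinity : IntegrableOn (fun x : E ↦ ‖x‖ ^ (-a) * (1 + ‖x‖ ^ 2) ^ (-b / 2))
      (Metric.ball 0 1)ᶜ μ := by
    refine ((integrable_rpow_neg_one_add_norm_sq hab).const_mul (2 ^ (a / 2))).integrableOn.mono'
      meas.restrict ?_
    filter_upwards [ae_restrict_mem Metric.isOpen_ball.measurableSet.compl] with x hx
    have one_le_norm : 1 ≤ ‖x‖ := by simpa using hx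
    calc ‖‖x‖ ^ (-a) * (1 + ‖x‖ ^ 2) ^ (-b / 2)‖
        = ‖x‖ ^ (-a) * (1 + ‖x‖ ^ 2) ^ (-b / 2) := Real.norm_of_nonneg (by positivity)
      _ ≤ 2 ^ (a / 2) * (1 + ‖x‖ ^ 2) ^ (-a / 2) * (1 + ‖x‖ ^ 2) ^ (-b / 2) := by
        gcongr; exact rpow_neg_le_one_add_sq_rpow_neg ha one_le_norm
      _ = 2 ^ (a / 2) * (1 + ‖x‖ ^ 2) ^ (-(a + b) / 2) := by
        rw [mul_assoc, ← Real.rpow_add (by positivity), ← add_div, neg_add]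
  simpa using near_zero.union near_infinity

theorem eLpNorm_two_inv_enorm_mul_japaneseBracket_rpow_lt_top {s : ℝ}
    (hd : 2 < Module.finrank ℝ E) (hs : (Module.finrank ℝ E : ℝ) / 2 - 1 < s) :
    eLpNorm (fun x : E ↦ (‖x‖ₑ * japaneseBracket x ^ s)⁻¹) 2 μ < ∞ := by
  have : Nontrivial E := Module.nontrivial_of_finrank_pos (R := ℝ) (by omega)
  have sq_eq : ∀ᵐ x ∂μ, ‖(‖x‖ₑ * japaneseBracket x ^ s)⁻¹‖ₑ ^ (2 : ℝ) =
      ENNReal.ofReal (‖x‖ ^ (-2 : ℝ) * (1 + ‖x‖ ^ 2) ^ (-(2 * s) / 2)) := by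
    filter_upwards [μ.ae_ne 0] with x hx
    have hx₀ : 0 < ‖x‖ := norm_pos_iff.2 hx
    rw [japaneseBracket_rpow, ← ofReal_norm, ← ENNReal.ofReal_mul hx₀.le,
      ← ENNReal.ofReal_inv_of_pos (by positivity), enorm_eq_self,
      ENNReal.ofReal_rpow_of_pos (by positivity), mul_inv, Real.mul_rpow (by positivity)
      (by positivity), ← Real.rpow_neg_one, ← Real.rpow_neg (by positivity), ← Real.rpow_mul hx₀.le,
      ← Real.rpow_mul (by positivity)]
    ring_nf
  rw [eLpNorm_lt_top_iff_lintegral_rpow_enorm_lt_top two_ne_zero ENNReal.ofNat_ne_top,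
    ENNReal.toReal_ofNat, lintegral_congr_ae sq_eq]
  exact (integrable_norm_rpow_neg_mul_one_add_norm_sq_rpow_neg zero_le_two (by exact_mod_cast hd)
    (by linarith)).lintegral_lt_top

end KernelIntegrability

section FourierPairing

variable {E F₁ F₂ F₃ : Type*} [NormedAddCommGroup E] [InnerProductSpace ℝ E]
  [FiniteDimensional ℝ E] [MeasurableSpace E] [BorelSpace E]
  [NormedAddCommGroup F₁] [NormedSpace ℂ F₁] [CompleteSpace F₁]
  [NormedAddCommGroup F₂] [NormedSpace ℂ F₂] [CompleteSpace F₂]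
  [NormedAddCommGroup F₃] [NormedSpace ℂ F₃] [CompleteSpace F₃]

theorem fourier_fourier_apply (f : 𝓢(E, F₁)) (x : E) : 𝓕 (𝓕 f) x = f (-x) := by
  calc 𝓕 (𝓕 f) x = 𝓕⁻ (𝓕 f) (-x) := by
        rw [SchwartzMap.fourierInv_coe, Real.fourierInv_eq_fourier_neg, neg_neg,
          SchwartzMap.fourier_coe]
    _ = f (-x) := by rw [FourierTransform.fourierInv_fourier_eq]

theorem fourier_pairing (B : F₁ →L[ℂ] F₂ →L[ℂ] F₃) (f : 𝓢(E, F₁)) (g : 𝓢(E, F₂)) :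
    𝓕 (SchwartzMap.pairing B f g) = SchwartzMap.convolution B (𝓕 f) (𝓕 g) := by
  apply (FourierTransform.fourierEquiv ℂ 𝓢(E, F₃)).injective
  ext x
  rw [FourierTransform.fourierEquiv_apply, FourierTransform.fourierEquiv_apply,
    SchwartzMap.fourier_convolution, SchwartzMap.pairing_apply_apply, fourier_fourier_apply,
    fourier_fourier_apply, fourier_fourier_apply, SchwartzMap.pairing_apply_apply]

theorem enorm_fourier_pairing_le (B : F₁ →L[ℂ] F₂ →L[ℂ] F₃) (f : 𝓢(E, F₁)) (g : 𝓢(E, F₂))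
    (ξ : E) : ‖𝓕 (SchwartzMap.pairing B f g) ξ‖ₑ ≤
      ‖B‖ₑ * ((fun η ↦ ‖𝓕 f η‖ₑ) ⋆ₗ[volume] (fun η ↦ ‖𝓕 g η‖ₑ)) ξ := by
  rw [fourier_pairing, SchwartzMap.convolution_apply, convolution_def, lconvolution_def,
    ← lintegral_const_mul' _ _ enorm_ne_top]
  refine (enorm_integral_le_lintegral_enorm _).trans (lintegral_mono fun η ↦ ?_)
  rw [neg_add_eq_sub, ← mul_assoc]
  exact (B (𝓕 f η)).le_of_opENorm_le (B.le_opENorm (𝓕 f η)) _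

end FourierPairing

section SobolevNorm

variable {E F : Type*} [NormedAddCommGroup E] [InnerProductSpace ℝ E] [FiniteDimensional ℝ E]
  [MeasurableSpace E] [BorelSpace E] [NormedAddCommGroup F] [NormedSpace ℂ F]

/-- The inhomogeneous Sobolev norm `‖f‖_{H^s}`, computed on the Fourier side. -/
noncomputable def sobolevNorm (s : ℝ) (f : E → F) : ℝ :=
  (∫ ξ : E, (1 + ‖ξ‖ ^ 2) ^ s * ‖𝓕 f ξ‖ ^ 2) ^ (1 / 2 : ℝ)

/-- The norm `‖∇f‖_{H^s}`, computed on the Fourier side, where the gradient is the multiplier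
`|ξ|`. -/
noncomputable def gradSobolevNorm (s : ℝ) (f : E → F) : ℝ :=
  (∫ ξ : E, ‖ξ‖ ^ 2 * (1 + ‖ξ‖ ^ 2) ^ s * ‖𝓕 f ξ‖ ^ 2) ^ (1 / 2 : ℝ)

theorem sobolevNorm_eq_toReal_eLpNorm (s : ℝ) (f : 𝓢(E, F)) :
    sobolevNorm s f = (eLpNorm (fun ξ ↦ japaneseBracket ξ ^ s * ‖𝓕 f ξ‖ₑ) 2 volume).toReal := by
  have := measurable_japaneseBracket (E := E)
  have := (𝓕 f).continuous
  rw [toReal_eLpNorm_two (by fun_prop) (.of_forall fun ξ ↦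
    ENNReal.mul_lt_top (japaneseBracket_rpow_ne_top ξ s).lt_top enorm_lt_top)]
  simp only [sobolevNorm, ENNReal.toReal_mul, toReal_enorm, mul_pow, toReal_japaneseBracket_rpow_sq,
    SchwartzMap.fourier_coe]

theorem gradSobolevNorm_eq_toReal_eLpNorm (s : ℝ) (f : 𝓢(E, F)) :
    gradSobolevNorm s f =
      (eLpNorm (fun ξ ↦ ‖ξ‖ₑ * japaneseBracket ξ ^ s * ‖𝓕 f ξ‖ₑ) 2 volume).toReal := by
  have := measurable_japaneseBracket (E := E)
  have := (𝓕 f).continuous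
  rw [toReal_eLpNorm_two (by fun_prop) (.of_forall fun ξ ↦ ENNReal.mul_lt_top
    (ENNReal.mul_lt_top enorm_lt_top (japaneseBracket_rpow_ne_top ξ s).lt_top) enorm_lt_top)]
  simp only [gradSobolevNorm, ENNReal.toReal_mul, toReal_enorm, mul_pow,
    toReal_japaneseBracket_rpow_sq, SchwartzMap.fourier_coe]

theorem eLpNorm_japaneseBracket_rpow_mul_enorm_lt_top (s : ℝ) (f : 𝓢(E, F)) :
    eLpNorm (fun ξ ↦ japaneseBracket ξ ^ s * ‖f ξ‖ₑ) 2 volume < ∞ := by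
  have growth := Function.hasTemperateGrowth_one_add_norm_sq_rpow E (s / 2)
  set h : 𝓢(E, F) := SchwartzMap.smulLeftCLM F (fun ξ : E ↦ (1 + ‖ξ‖ ^ 2) ^ (s / 2)) f with hh
  have enorm_eq (ξ : E) : japaneseBracket ξ ^ s * ‖f ξ‖ₑ = ‖h ξ‖ₑ := by
    rw [hh, SchwartzMap.smulLeftCLM_apply_apply growth, enorm_smul, japaneseBracket_rpow,
      Real.enorm_of_nonneg (by positivity)]
  simp only [enorm_eq, eLpNorm_enorm]
  exact h.eLpNorm_lt_top 2 volume

theorem eLpNorm_enorm_mul_japaneseBracket_rpow_mul_enorm_lt_top (s : ℝ) (f : 𝓢(E, F)) :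
    eLpNorm (fun ξ ↦ ‖ξ‖ₑ * japaneseBracket ξ ^ s * ‖f ξ‖ₑ) 2 volume < ∞ := by
  refine (eLpNorm_mono_enorm fun ξ ↦ ?_).trans_lt
    (eLpNorm_japaneseBracket_rpow_mul_enorm_lt_top (s + 1) f)
  have ne_zero : japaneseBracket ξ ≠ 0 := by simpa using japaneseBracket_rpow_ne_zero ξ 1
  have ne_top : japaneseBracket ξ ≠ ∞ := by simpa using japaneseBracket_rpow_ne_top ξ 1
  rw [enorm_eq_self, enorm_eq_self, ENNReal.rpow_add _ _ ne_zero ne_top, ENNReal.rpow_one,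
    mul_comm (japaneseBracket ξ ^ s)]
  gcongr
  exact enorm_le_japaneseBracket ξ

end SobolevNorm

section ProductEstimate

variable {E F₁ F₂ F₃ : Type*} [NormedAddCommGroup E] [InnerProductSpace ℝ E]
  [FiniteDimensional ℝ E] [MeasurableSpace E] [BorelSpace E]
  [NormedAddCommGroup F₁] [NormedSpace ℂ F₁] [CompleteSpace F₁]
  [NormedAddCommGroup F₂] [NormedSpace ℂ F₂] [CompleteSpace F₂]
  [NormedAddCommGroup F₃] [NormedSpace ℂ F₃] [CompleteSpace F₃]

theorem eLpNorm_japaneseBracket_rpow_mul_enorm_fourier_pairing_le [Nontrivial E] {s : ℝ}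
    (hs : 0 ≤ s) (B : F₁ →L[ℂ] F₂ →L[ℂ] F₃) (f : 𝓢(E, F₁)) (g : 𝓢(E, F₂)) :
    eLpNorm (fun ξ ↦ japaneseBracket ξ ^ s * ‖𝓕 (SchwartzMap.pairing B f g) ξ‖ₑ) 2 volume ≤
      ‖B‖ₑ * (2 ^ (s + 1) *
        eLpNorm (fun ξ : E ↦ (‖ξ‖ₑ * japaneseBracket ξ ^ s)⁻¹) 2 volume *
        eLpNorm (fun ξ ↦ ‖ξ‖ₑ * japaneseBracket ξ ^ s * ‖𝓕 f ξ‖ₑ) 2 volume *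
        eLpNorm (fun ξ ↦ japaneseBracket ξ ^ s * ‖𝓕 g ξ‖ₑ) 2 volume) := by
  have pointwise (ξ : E) : japaneseBracket ξ ^ s * ‖𝓕 (SchwartzMap.pairing B f g) ξ‖ₑ ≤
      ‖B‖ₑ * (japaneseBracket ξ ^ s *
        ((fun η ↦ ‖𝓕 f η‖ₑ) ⋆ₗ[volume] (fun η ↦ ‖𝓕 g η‖ₑ)) ξ) := by
    rw [mul_left_comm]
    gcongr
    exact enorm_fourier_pairing_le B f g ξ
  refine (eLpNorm_le_nnreal_smul_eLpNorm_of_ae_le_mul' (c := ‖B‖₊)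
    (g := fun ξ : E ↦ japaneseBracket ξ ^ s *
      ((fun η ↦ ‖𝓕 f η‖ₑ) ⋆ₗ[volume] (fun η ↦ ‖𝓕 g η‖ₑ)) ξ) (.of_forall pointwise) 2).trans ?_
  rw [ENNReal.smul_def, smul_eq_mul, ← enorm_eq_nnnorm]
  gcongr
  exact eLpNorm_japaneseBracket_rpow_mul_lconvolution_le hs
    (𝓕 f).continuous.enorm.measurable (𝓕 g).continuous.enorm.measurable

theorem sobolevNorm_pairing_le [Nontrivial E] {s : ℝ} (hs : 0 ≤ s)
    (hκ : eLpNorm (fun ξ : E ↦ (‖ξ‖ₑ * japaneseBracket ξ ^ s)⁻¹) 2 volume ≠ ∞)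
    (B : F₁ →L[ℂ] F₂ →L[ℂ] F₃) (f : 𝓢(E, F₁)) (g : 𝓢(E, F₂)) :
    sobolevNorm s (fun x ↦ B (f x) (g x)) ≤
      (2 ^ (s + 1) * eLpNorm (fun ξ : E ↦ (‖ξ‖ₑ * japaneseBracket ξ ^ s)⁻¹) 2 volume).toReal *
        ‖B‖ * gradSobolevNorm s f * sobolevNorm s g := by
  have hf := eLpNorm_enorm_mul_japaneseBracket_rpow_mul_enorm_lt_top s (𝓕 f)
  have hg := eLpNorm_japaneseBracket_rpow_mul_enorm_lt_top s (𝓕 g)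
  have two_rpow_ne_top : (2 : ℝ≥0∞) ^ (s + 1) ≠ ∞ :=
    ENNReal.rpow_ne_top_of_nonneg (by linarith) (by simp)
  have estimate := ENNReal.toReal_mono
    (ENNReal.mul_ne_top enorm_ne_top (ENNReal.mul_ne_top (ENNReal.mul_ne_top
      (ENNReal.mul_ne_top two_rpow_ne_top hκ) hf.ne) hg.ne))
    (eLpNorm_japaneseBracket_rpow_mul_enorm_fourier_pairing_le hs B f g)
  rw [← sobolevNorm_eq_toReal_eLpNorm, ENNReal.toReal_mul, toReal_enorm, ENNReal.toReal_mul,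
    ENNReal.toReal_mul, ← sobolevNorm_eq_toReal_eLpNorm, ← gradSobolevNorm_eq_toReal_eLpNorm,
    ← mul_assoc, ← mul_assoc, mul_comm ‖B‖] at estimate
  rwa [← funext fun x ↦ SchwartzMap.pairing_apply_apply B f g x]

theorem product_estimate_X_Hs_general (hd : 2 < Module.finrank ℝ E) {s : ℝ}
    (hs : (Module.finrank ℝ E : ℝ) / 2 - 1 < s) :
    ∃ c₁ > (0 : ℝ), ∀ (B : F₁ →L[ℂ] F₂ →L[ℂ] F₃) (f : 𝓢(E, F₁)) (g : 𝓢(E, F₂)),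
      sobolevNorm s (fun x ↦ B (f x) (g x)) ≤
        c₁ * ‖B‖ * gradSobolevNorm s f * sobolevNorm s g := by
  have : Nontrivial E := Module.nontrivial_of_finrank_pos (R := ℝ) (by omega)
  have hs₀ : 0 ≤ s := by
    have : (2 : ℝ) < Module.finrank ℝ E := by exact_mod_cast hd
    linarith
  have hκ := (eLpNorm_two_inv_enorm_mul_japaneseBracket_rpow_lt_top (μ := volume) hd hs).ne
  set κ := eLpNorm (fun ξ : E ↦ (‖ξ‖ₑ * japaneseBracket ξ ^ s)⁻¹) 2 volume
  refine ⟨(2 ^ (s + 1) * κ).toReal + 1, by positivity,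
    fun B f g ↦ (sobolevNorm_pairing_le hs₀ hκ B f g).trans ?_⟩
  have hf : 0 ≤ gradSobolevNorm s f := by unfold gradSobolevNorm; positivity
  have hg : 0 ≤ sobolevNorm s g := by unfold sobolevNorm; positivity
  gcongr
  exact (lt_add_one _).le

end ProductEstimate

theorem product_estimate_X_Hs (hn : 3 ≤ n) (s : ℝ) (hs : s > (n : ℝ) / 2 - 1) :
    ∃ c₁ > (0 : ℝ), ∀ f g : SchwartzMap (EuclideanSpace ℝ (Fin n)) ℂ,
      HsNorm s (fun x => f x * g x) ≤ c₁ * XNorm s (⇑f) * HsNorm s (⇑g) := by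
  rw [← finrank_euclideanSpace_fin (𝕜 := ℝ) (n := n)] at hs
  obtain ⟨c₁, hc₁, estimate⟩ := product_estimate_X_Hs_general (E := EuclideanSpace ℝ (Fin n))
    (F₁ := ℂ) (F₂ := ℂ) (F₃ := ℂ) (by rwa [finrank_euclideanSpace_fin]) hs
  exact ⟨c₁, hc₁, fun f g ↦ by
    simpa [HsNorm, XNorm, sobolevNorm, gradSobolevNorm] using estimate (.mul ℂ ℂ) f g⟩
end
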